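/- arXiv:2504.17530 — 5 statements merged into one kernel-verified Lean document; each statement's English description precedes it below -/
import Mathlib

section
/- (Doignon's theorem.) Let F be a finite family of convex sets in R^d. If the intersection of every subfamily of F with at most 2^d members contains a point of Z^d, then the intersection of all members of F contains a point of Z^d. -/
/-- The set of lattice points of `ℝ^d`: points all of whose coordinates are integers. -/
def latticePoints (d : ℕ) : Set (Fin d → ℝ) := {x | ∀ i, ∃ n : ℤ, x i = n}

theorem anti_exchange {E : Type*} [AddCommGroup E] [Module ℝ E] (K : Set E) (p q : E)
    (hp : p ∈ convexHull ℝ (insert q K)) (hq : q ∈ convexHull ℝ (insert p K))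
    (hpK : p ∉ convexHull ℝ K) : p = q := by
  rcases K.eq_empty_or_nonempty with rfl | hK
  · simpa using hp
  rw [convexHull_insert hK, mem_convexJoin] at hp hq
  obtain ⟨q', hq', k, hk, a, b, ha, hb, hab, hp⟩ := hp
  obtain ⟨p', hp', l, hl, a', b', ha', hb', hab', hq⟩ := hq
  rw [Set.mem_singleton_iff] at hq' hp'
  rw [hq'] at hp
  rw [hp'] at hq
  by_contra hne
  apply hpK
  have hconv := convex_convexHull ℝ K
  have hc : 0 < b + a * b' := by
    rcases hb.eq_or_lt with h0 | h0
    · exfalso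
      subst h0
      have : a = 1 := by linarith
      subst this
      apply hne
      rw [← hp]; simp
    · positivity
  have e1 : (b + a * b') • p = b • k + (a * b') • l := by
    have h1 : b + a * b' = 1 - a * a' := by
      have : b = 1 - a := by linarith
      have : b' = 1 - a' := by linarith
      subst_vars; ring
    rw [h1, sub_smul, one_smul]
    have e0 : p = a • (a' • p + b' • l) + b • k := by rw [hq, hp]
    nth_rewrite 1 [e0]
    module
  have e2 : p = (b / (b + a * b')) • k + ((a * b') / (b + a * b')) • l := by
    have := congrArg (fun x => (b + a * b')⁻¹ • x) e1
    simp only [smul_smul, smul_add] at this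
    rw [inv_mul_cancel₀ hc.ne', one_smul] at this
    rw [this]
    simp only [div_eq_inv_mul]
  rw [e2]
  exact hconv hk hl (by positivity) (by positivity) (by field_simp)

theorem doignon_core {E ι : Type*} [AddCommGroup E] [Module ℝ E] [Finite ι]
    (S : Set E) (hS : S.Finite)
    (hmid : ∀ p : ι → E, (∀ i, p i ∈ S) → ∃ i j, i ≠ j ∧ midpoint ℝ (p i) (p j) ∈ S)
    (C : ι → Set E) (hC : ∀ i, Convex ℝ (C i))
    (h : ∀ i, ∃ p ∈ S, ∀ j, j ≠ i → p ∈ C j) : ∃ p ∈ S, ∀ i, p ∈ C i := by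
  by_contra hcon
  push Not at hcon
  let P : Set (ι → Set E) := {K | (∀ i, K i ⊆ S) ∧ (∀ i, convexHull ℝ (K i) ∩ S ⊆ K i) ∧
    (∀ i, ∃ p ∈ S, ∀ j, j ≠ i → p ∈ K j) ∧ ∀ p ∈ S, ∃ i, p ∉ K i}
  have hPfin : P.Finite := by
    refine (Set.Finite.pi (fun _ : ι => hS.finite_subsets)).subset ?_
    intro K hK i _
    exact hK.1 i
  have hPne : P.Nonempty := by
    refine ⟨fun i => C i ∩ S, fun i => Set.inter_subset_right, fun i x hx => ?_, fun i => ?_, ?_⟩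
    · exact ⟨convexHull_min Set.inter_subset_left (hC i) hx.1, hx.2⟩
    · obtain ⟨p, hp, hp'⟩ := h i
      exact ⟨p, hp, fun j hj => ⟨hp' j hj, hp⟩⟩
    · intro p hp
      obtain ⟨i, hi⟩ := hcon p hp
      exact ⟨i, fun h => hi h.1⟩
  obtain ⟨K, hK, hmax⟩ := hPfin.exists_maximal hPne
  obtain ⟨hKS, hKc, hKA, hKe⟩ := hK
  have key : ∀ i, ∃ p ∈ S, (∀ j, j ≠ i → p ∈ K j) ∧ ∀ q ∈ S, (∀ j, j ≠ i → q ∈ K j) →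
      q ∈ convexHull ℝ (insert p (K i)) → q = p := by
    intro i
    have hfin : {p | p ∈ S ∧ ∀ j, j ≠ i → p ∈ K j}.Finite := hS.subset fun p hp => hp.1
    obtain ⟨p, hp, hmin⟩ := hfin.exists_minimalFor
      (fun p => convexHull ℝ (insert p (K i))) _ (hKA i)
    refine ⟨p, hp.1, hp.2, fun q hqS hqA hq => ?_⟩
    have hle : convexHull ℝ (insert q (K i)) ≤ convexHull ℝ (insert p (K i)) := by
      refine convexHull_min (Set.insert_subset hq ?_) (convex_convexHull ℝ _)
      exact (Set.subset_insert _ _).trans (subset_convexHull ℝ _)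
    have hle' := hmin (j := q) ⟨hqS, hqA⟩ hle
    refine (anti_exchange (K i) p q (hle' (subset_convexHull ℝ _ (Set.mem_insert _ _))) hq ?_).symm
    intro hpK
    obtain ⟨j, hj⟩ := hKe p hp.1
    by_cases hji : j = i
    · subst hji
      exact hj (hKc _ ⟨hpK, hp.1⟩)
    · exact hj (hp.2 j hji)
  choose p hpS hpA hpmin using key
  have claim : ∀ i j, i ≠ j → midpoint ℝ (p i) (p j) ∈ S → midpoint ℝ (p i) (p j) ∈ K i := by
    intro i j hij hmS
    by_contra hm
    set m := midpoint ℝ (p i) (p j) with hmdef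
    have hpi : p i ∉ convexHull ℝ (K i) := by
      intro hpK
      obtain ⟨k, hk⟩ := hKe (p i) (hpS i)
      by_cases hki : k = i
      · subst hki
        exact hk (hKc _ ⟨hpK, hpS _⟩)
      · exact hk (hpA i k hki)
    have hmc : m ∈ convexHull ℝ (insert (p i) (K i)) := by
      apply (convex_convexHull ℝ _).midpoint_mem
      · exact subset_convexHull ℝ _ (Set.mem_insert _ _)
      · exact subset_convexHull ℝ _ (Set.mem_insert_of_mem _ (hpA j i hij))
    have hsub : convexHull ℝ (insert m (K i)) ⊆ convexHull ℝ (insert (p i) (K i)) := by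
      refine convexHull_min (Set.insert_subset hmc ?_) (convex_convexHull ℝ _)
      exact (Set.subset_insert _ _).trans (subset_convexHull ℝ _)
    have hex : ∃ q ∈ S, (∀ k, k ≠ i → q ∈ K k) ∧ q ∈ convexHull ℝ (insert m (K i)) := by
      classical
      by_contra hno
      push Not at hno
      let L : ι → Set E := Function.update K i (convexHull ℝ (insert m (K i)) ∩ S)
      have hLi : L i = convexHull ℝ (insert m (K i)) ∩ S := by simp [L]
      have hLk : ∀ k, k ≠ i → L k = K k := fun k hk => by simp [L, hk]
      have hKL : K ≤ L := by
        intro k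
        by_cases hk : k = i
        · subst hk
          rw [hLi]
          exact fun x hx => ⟨subset_convexHull ℝ _ (Set.mem_insert_of_mem _ hx), hKS _ hx⟩
        · rw [hLk k hk]
      have hLP : L ∈ P := by
        refine ⟨fun k => ?_, fun k => ?_, fun k => ?_, fun x hx => ?_⟩
        · by_cases hk : k = i
          · subst hk; rw [hLi]; exact Set.inter_subset_right
          · rw [hLk k hk]; exact hKS k
        · by_cases hk : k = i
          · subst hk; rw [hLi]
            exact fun x hx => ⟨convexHull_min Set.inter_subset_left (convex_convexHull ℝ _) hx.1, hx.2⟩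
          · rw [hLk k hk]; exact hKc k
        · obtain ⟨x, hx, hx'⟩ := hKA k
          exact ⟨x, hx, fun l hl => hKL l (hx' l hl)⟩
        · by_cases hxA : ∀ k, k ≠ i → x ∈ K k
          · exact ⟨i, by rw [hLi]; exact fun h => hno x hx hxA h.1⟩
          · push Not at hxA
            obtain ⟨k, hk, hxk⟩ := hxA
            exact ⟨k, by rw [hLk k hk]; exact hxk⟩
      have := hmax hLP hKL i
      rw [hLi] at this
      exact hm (this ⟨subset_convexHull ℝ _ (Set.mem_insert _ _), hmS⟩)
    obtain ⟨q, hqS, hqA, hq⟩ := hex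
    have hqp := hpmin i q hqS hqA (hsub hq)
    rw [hqp] at hq
    have hpm := anti_exchange (K i) (p i) m hq hmc hpi
    have : p i = p j := by
      rw [hmdef] at hpm
      exact (left_eq_midpoint_iff (R := ℝ)).1 hpm
    exact hpi (this ▸ subset_convexHull ℝ _ (hpA j i hij))
  obtain ⟨i, j, hij, hm⟩ := hmid p hpS
  have h1 := claim i j hij hm
  have h2 := claim j i hij.symm (by rwa [midpoint_comm])
  rw [midpoint_comm] at h2
  obtain ⟨k, hk⟩ := hKe _ hm
  by_cases hki : k = i
  · subst hki; exact hk h1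
  by_cases hkj : k = j
  · subst hkj; exact hk h2
  have hKk : Convex ℝ (convexHull ℝ (K k)) := convex_convexHull ℝ _
  exact hk (hKc k ⟨hKk.midpoint_mem (subset_convexHull ℝ _ (hpA i k hki))
    (subset_convexHull ℝ _ (hpA j k hkj)), hm⟩)

theorem doignon_step {ι : Type*} [Fintype ι] (d : ℕ) (hcard : 2 ^ d < Fintype.card ι)
    (C : ι → Set (Fin d → ℝ)) (hC : ∀ i, Convex ℝ (C i))
    (h : ∀ i, ∃ p ∈ latticePoints d, ∀ j, j ≠ i → p ∈ C j) :
    ∃ p ∈ latticePoints d, ∀ i, p ∈ C i := by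
  choose p hp hpC using h
  choose z hz using hp
  let N : Fin d → ℤ := fun k => ∑ i, |z i k|
  let c : (Fin d → ℤ) → (Fin d → ℝ) := fun z k => (z k : ℝ)
  have hzN : ∀ i k, |z i k| ≤ N k := fun i k =>
    Finset.single_le_sum (f := fun i => |z i k|) (fun _ _ => abs_nonneg _) (Finset.mem_univ i)
  refine (fun main => ?_) (doignon_core (ι := ι) (Set.image c (Set.Icc (-N) N))
    ((Set.finite_Icc _ _).image c) ?_ C hC ?_)
  · obtain ⟨x, hx, hx'⟩ := main
    obtain ⟨w, -, rfl⟩ := hx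
    exact ⟨c w, fun k => ⟨w k, rfl⟩, hx'⟩
  · intro q hq
    choose w hw hwq using hq
    obtain ⟨i, j, hij, he⟩ := Fintype.exists_ne_map_eq_of_card_lt
      (fun i (k : Fin d) => ((w i k : ℤ) : ZMod 2)) (by simpa using hcard)
    refine ⟨i, j, hij, fun k => (w i k + w j k) / 2, ⟨fun k => ?_, fun k => ?_⟩, ?_⟩
    · have h1 := (hw i).1 k
      have h2 := (hw j).1 k
      simp only [Pi.neg_apply] at *
      omega
    · have h1 := (hw i).2 k
      have h2 := (hw j).2 k
      simp only at *
      omega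
    · rw [← hwq i, ← hwq j]
      funext k
      have hk := (ZMod.intCast_eq_intCast_iff_dvd_sub _ _ 2).1 (congrFun he k)
      obtain ⟨t, ht⟩ := hk
      have e : w j k = w i k + 2 * t := by push_cast at ht; linarith
      have e2 : (w i k + w j k) / 2 = w i k + t := by omega
      simp only [c, midpoint_eq_smul_add, Pi.smul_apply, Pi.add_apply, smul_eq_mul]
      rw [e2, e]
      push_cast
      rw [invOf_eq_inv]
      ring
  · intro i
    refine ⟨p i, ⟨z i, ⟨fun k => ?_, fun k => ?_⟩, ?_⟩, hpC i⟩
    · exact (abs_le.1 (hzN i k)).1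
    · exact (abs_le.1 (hzN i k)).2
    · funext k
      exact (hz i k).symm

/-- **Doignon's theorem.** If every subfamily with at most `2 ^ d` members of a
finite family of convex sets in `ℝ^d` has a lattice point in its intersection, then the whole
family has a lattice point in its intersection. -/
theorem doignon (d : ℕ) (F : Finset (Set (Fin d → ℝ)))
    (hconv : ∀ C ∈ F, Convex ℝ C)
    (h : ∀ G : Finset (Set (Fin d → ℝ)), G ⊆ F → G.card ≤ 2 ^ d →
      ∃ p ∈ latticePoints d, ∀ C ∈ G, p ∈ C) :
    ∃ p ∈ latticePoints d, ∀ C ∈ F, p ∈ C := by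
  classical
  induction F using Finset.strongInduction with
  | H F ih =>
    by_cases hc : F.card ≤ 2 ^ d
    · exact h F subset_rfl hc
    push Not at hc
    obtain ⟨p, hp, hp'⟩ := doignon_step (ι := F) d (by simpa using hc) (fun C => C.1)
      (fun C => hconv C.1 C.2) (fun C => by
        obtain ⟨p, hp, hp'⟩ := ih (F.erase C.1) (Finset.erase_ssubset C.2)
          (fun D hD => hconv D (Finset.mem_of_mem_erase hD))
          (fun G hG => h G (hG.trans (Finset.erase_subset _ _)))
        exact ⟨p, hp, fun D hD => hp' D.1 (Finset.mem_erase.2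
          ⟨fun e => hD (Subtype.ext e), D.2⟩)⟩)
    exact ⟨p, hp, fun C hC => hp' ⟨C, hC⟩⟩
end

section
/- There is an absolute constant C > 0 such that for every d ≥ 2 the following holds: if X ⊆ Z^d is a finite set of points in general position (no d+1 points of X lie in a common affine hyperplane), every point of X is an extreme point of conv(X), and the interior of conv(X) contains no point of Z^d, then |X| ≤ C · d^2 · (log d)^3. -/
/-- A finite set in `ℝ^d` is in general position if no `d + 1` of its points lie in a common
affine hyperplane. -/
def InGeneralPosition (d : ℕ) (X : Finset (Fin d → ℝ)) : Prop :=
  ∀ s : Finset (Fin d → ℝ), s ⊆ X → s.card = d + 1 →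
    ¬∃ v : Fin d → ℝ, v ≠ 0 ∧ ∃ c : ℝ, ∀ x ∈ s, ∑ i, x i * v i = c

section helpers
open Matrix MeasureTheory

/-- cast of an integer vector -/
def zc {d : ℕ} (z : Fin d → ℤ) : Fin d → ℝ := fun i => (z i : ℝ)

/-- the Gaussian attached to a matrix -/
noncomputable def gq {d : ℕ} (A : Matrix (Fin d) (Fin d) ℝ) (x : Fin d → ℝ) : ℝ :=
  Real.exp (-Real.pi * ((A *ᵥ x) ⬝ᵥ (A *ᵥ x)))

lemma gq_pos {d : ℕ} (A : Matrix (Fin d) (Fin d) ℝ) (x : Fin d → ℝ) : 0 < gq A x :=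
  Real.exp_pos _

lemma gq_continuous {d : ℕ} (A : Matrix (Fin d) (Fin d) ℝ) : Continuous (gq A) := by
  unfold gq
  fun_prop

lemma summable_pi_prod (d : ℕ) (f : ℤ → ℝ) (hf0 : ∀ n, 0 ≤ f n) (hf : Summable f) :
    Summable (fun z : Fin d → ℤ => ∏ i, f (z i)) := by
  induction d with
  | zero => exact Summable.of_finite
  | succ d ih =>
    rw [← (Fin.consEquiv (fun _ : Fin (d+1) => ℤ)).summable_iff]
    have := Summable.mul_of_nonneg hf ih (fun n => hf0 n)
      (fun z => Finset.prod_nonneg (fun i _ => hf0 _))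
    convert this using 2 with p
    simp [Fin.consEquiv, Fin.prod_univ_succ]

lemma summable_int_gauss (c : ℝ) (hc : 0 < c) : Summable (fun n : ℤ => Real.exp (-c * (n:ℝ)^2)) := by
  have h1 : Summable (fun n : ℕ => Real.exp (-c * (n:ℝ)^2)) := by
    have h2 : Summable (fun n : ℕ => Real.exp (-c) ^ n) :=
      summable_geometric_of_lt_one (Real.exp_pos _).le (by simpa using hc)
    refine Summable.of_nonneg_of_le (fun _ => (Real.exp_pos _).le) (fun n => ?_) h2
    rw [← Real.exp_nat_mul, Real.exp_le_exp]
    have : (n:ℝ) ≤ (n:ℝ)^2 := by exact_mod_cast Nat.le_self_pow (by norm_num) n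
    nlinarith
  refine Summable.of_nat_of_neg (by simpa using h1) (by simpa using h1)

lemma gq_quad_lower {d : ℕ} (A : Matrix (Fin d) (Fin d) ℝ) (hA : A.det ≠ 0) :
    ∃ c : ℝ, 0 < c ∧ ∀ x : Fin d → ℝ, c * ∑ i, x i ^ 2 ≤ (A *ᵥ x) ⬝ᵥ (A *ᵥ x) := by
  set K : ℝ := ∑ i, ∑ j, (A⁻¹ i j)^2 with hK
  have hK0 : 0 ≤ K := Finset.sum_nonneg fun i _ => Finset.sum_nonneg fun j _ => sq_nonneg _
  refine ⟨(K+1)⁻¹, by positivity, fun x => ?_⟩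
  set w := A *ᵥ x with hw
  have hx : x = A⁻¹ *ᵥ w := by
    rw [hw, mulVec_mulVec, nonsing_inv_mul _ (isUnit_iff_ne_zero.mpr hA), one_mulVec]
  have h1 : ∑ i, x i ^ 2 ≤ K * (w ⬝ᵥ w) := by
    rw [hK, Finset.sum_mul]
    refine Finset.sum_le_sum fun i _ => ?_
    rw [hx]
    have := Finset.sum_mul_sq_le_sq_mul_sq Finset.univ (fun j => A⁻¹ i j) w
    simpa [mulVec, dotProduct, sq] using this
  have h2 : 0 ≤ w ⬝ᵥ w := by
    simp only [dotProduct]; exact Finset.sum_nonneg fun i _ => mul_self_nonneg _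
  rw [inv_mul_le_iff₀ (by positivity)]
  nlinarith

lemma gq_bound {d : ℕ} (A : Matrix (Fin d) (Fin d) ℝ) (hA : A.det ≠ 0) (R : ℝ) :
    ∃ g : (Fin d → ℤ) → ℝ, Summable g ∧ ∀ x : Fin d → ℝ, (∀ i, |x i| ≤ R) →
      ∀ z, gq A (x + zc z) ≤ g z := by
  obtain ⟨c, hc, h⟩ := gq_quad_lower A hA
  refine ⟨fun z => Real.exp (Real.pi * c * (d * R^2)) *
    ∏ i, Real.exp (-(Real.pi * c / 2) * (z i : ℝ)^2), ?_, ?_⟩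
  · exact Summable.mul_left _ (summable_pi_prod d (fun n => Real.exp (-(Real.pi * c / 2) * (n : ℝ)^2))
      (fun n => (Real.exp_pos _).le) (summable_int_gauss _ (by positivity)))
  · intro x hx z
    simp only [gq]
    rw [← Real.exp_sum, ← Real.exp_add, Real.exp_le_exp, ← Finset.mul_sum]
    have h1 := h (x + zc z)
    have h2 : (1/2) * ∑ i, (z i : ℝ)^2 - d * R^2 ≤ ∑ i, (x + zc z) i ^ 2 := by
      have : (d : ℝ) * R^2 = ∑ i : Fin d, R^2 := by simp
      rw [this, Finset.mul_sum, ← Finset.sum_sub_distrib]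
      refine Finset.sum_le_sum fun i _ => ?_
      have := sq_le_sq' (abs_le.mp (hx i)).1 (abs_le.mp (hx i)).2
      simp only [Pi.add_apply, zc]
      nlinarith [sq_nonneg (2 * x i + z i)]
    have h3 := mul_le_mul_of_nonneg_left h2 hc.le
    have h4 := mul_le_mul_of_nonneg_left (h3.trans h1) Real.pi_pos.le
    linarith

lemma gq_summable {d : ℕ} (A : Matrix (Fin d) (Fin d) ℝ) (hA : A.det ≠ 0) (x : Fin d → ℝ) :
    Summable (fun z => gq A (x + zc z)) := by
  obtain ⟨g, hg, h⟩ := gq_bound A hA (∑ i, |x i|)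
  exact Summable.of_nonneg_of_le (fun z => (gq_pos _ _).le) (h x (fun i =>
    Finset.single_le_sum (f := fun i => |x i|) (fun i _ => abs_nonneg _) (Finset.mem_univ i))) hg

/-- theta function -/
noncomputable def th {d : ℕ} (A : Matrix (Fin d) (Fin d) ℝ) (x : Fin d → ℝ) : ℝ :=
  ∑' z : Fin d → ℤ, gq A (x + zc z)

lemma th_continuous {d : ℕ} (A : Matrix (Fin d) (Fin d) ℝ) (hA : A.det ≠ 0) :
    Continuous (th A) := by
  rw [continuous_iff_continuousAt]
  intro x
  obtain ⟨g, hg, h⟩ := gq_bound A hA (‖x‖ + 1)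
  have : ContinuousOn (th A) (Metric.ball 0 (‖x‖+1)) := by
    refine continuousOn_tsum (fun z => ?_) hg ?_
    · exact ((gq_continuous A).comp (by fun_prop)).continuousOn
    · intro z y hy
      rw [Real.norm_of_nonneg (gq_pos _ _).le]
      refine h y (fun i => ?_) z
      rw [mem_ball_zero_iff] at hy
      exact (norm_le_pi_norm y i).trans hy.le
  exact this.continuousAt (Metric.isOpen_ball.mem_nhds (by simp))

lemma th_periodic {d : ℕ} (A : Matrix (Fin d) (Fin d) ℝ) (x : Fin d → ℝ) (w : Fin d → ℤ) :
    th A (x + zc w) = th A x := by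
  unfold th
  rw [← (Equiv.addLeft w).tsum_eq (fun z => gq A (x + zc z))]
  refine tsum_congr fun z => ?_
  congr 1
  ext i; simp [zc]; ring

lemma gauss_fourier {d : ℕ} (A : Matrix (Fin d) (Fin d) ℝ) (hA : A.det ≠ 0) (y : Fin d → ℤ) :
    Integrable (fun x : Fin d → ℝ => Complex.exp (-2 * Real.pi * Complex.I * ((zc y ⬝ᵥ x : ℝ) : ℂ))
      * (gq A x : ℂ)) ∧
    ∫ x : Fin d → ℝ, Complex.exp (-2 * Real.pi * Complex.I * ((zc y ⬝ᵥ x : ℝ) : ℂ)) * (gq A x : ℂ)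
      = ((|A.det⁻¹| * gq (A⁻¹)ᵀ (zc y) : ℝ) : ℂ) := by
  set w : Fin d → ℝ := (A⁻¹)ᵀ *ᵥ zc y with hw
  set c : Fin d → ℂ := fun i => -2 * Real.pi * Complex.I * (w i : ℂ) with hc
  set g : (Fin d → ℝ) → ℂ := fun v =>
    Complex.exp (-(Real.pi : ℂ) * ∑ i, (v i : ℂ) ^ 2 + ∑ i, c i * v i) with hg
  have hpi : (0:ℝ) < (Real.pi : ℂ).re := by simpa using Real.pi_pos
  have hgi : Integrable g := GaussianFourier.integrable_cexp_neg_mul_sum_add hpi c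
  have hfun : (fun x : Fin d → ℝ => Complex.exp (-2 * Real.pi * Complex.I * ((zc y ⬝ᵥ x : ℝ) : ℂ))
      * (gq A x : ℂ)) = fun x => g (toLin' A x) := by
    ext x
    have h1 : zc y ⬝ᵥ x = w ⬝ᵥ (A *ᵥ x) := by
      rw [hw, mulVec_transpose, ← dotProduct_mulVec, mulVec_mulVec,
        nonsing_inv_mul _ (isUnit_iff_ne_zero.mpr hA), one_mulVec]
    rw [h1, gq, hg, Complex.ofReal_exp, ← Complex.exp_add]
    congr 1
    simp only [toLin'_apply, dotProduct, hc]
    push_cast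
    rw [add_comm, Finset.mul_sum, Finset.mul_sum, Finset.mul_sum]
    congr 1
    · refine Finset.sum_congr rfl fun i _ => by ring
    · refine Finset.sum_congr rfl fun i _ => by ring
  have hmap := Real.map_matrix_volume_pi_eq_smul_volume_pi hA
  have hme : Measurable (toLin' A) := (LinearMap.continuous_of_finiteDimensional _).measurable
  rw [hfun]
  have hgi2 : Integrable g (Measure.map (toLin' A) volume) := by
    rw [hmap]; exact hgi.smul_measure (by simp)
  refine ⟨hgi2.comp_measurable hme, ?_⟩
  rw [← integral_map hme.aemeasurable hgi2.aestronglyMeasurable, hmap, integral_smul_measure,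
    GaussianFourier.integral_cexp_neg_mul_sum_add hpi, gq, ← hw]
  have hp : (Real.pi : ℂ) ≠ 0 := by exact_mod_cast Real.pi_ne_zero
  rw [div_self hp, Complex.one_cpow, one_mul, ENNReal.toReal_ofReal (abs_nonneg _)]
  rw [Complex.ofReal_mul, Complex.ofReal_exp, Complex.real_smul]
  congr 2
  simp only [hc, mul_pow, dotProduct, Complex.I_sq]
  push_cast
  rw [← Finset.mul_sum]
  field_simp
  ring_nf

lemma mFourier_coe {d : ℕ} (y : Fin d → ℤ) (x : Fin d → ℝ) :
    UnitAddTorus.mFourier y (fun i => (x i : UnitAddCircle)) =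
      Complex.exp (2 * Real.pi * Complex.I * ((zc y ⬝ᵥ x : ℝ) : ℂ)) := by
  simp only [UnitAddTorus.mFourier, ContinuousMap.coe_mk, fourier_coe_apply, ← Complex.exp_sum,
    dotProduct, zc]
  push_cast
  rw [Finset.mul_sum]
  congr 1
  refine Finset.sum_congr rfl fun i _ => by ring

lemma box_unfold {d : ℕ} (f : (Fin d → ℝ) → ℂ) (hf : Integrable f) :
    ∫ x in {x : Fin d → ℝ | ∀ i, x i ∈ Set.Ioc ((0 : Fin d → ℝ) i) ((0 : Fin d → ℝ) i + 1)},
      ∑' z : Fin d → ℤ, f (x + zc z) = ∫ x, f x := by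
  set B : Set (Fin d → ℝ) :=
    {x : Fin d → ℝ | ∀ i, x i ∈ Set.Ioc ((0 : Fin d → ℝ) i) ((0 : Fin d → ℝ) i + 1)} with hB
  have hBm : MeasurableSet B := by
    have : B = Set.univ.pi fun i : Fin d => Set.Ioc ((0 : Fin d → ℝ) i) ((0 : Fin d → ℝ) i + 1) := by
      ext x; simp [hB]
    rw [this]
    exact MeasurableSet.univ_pi fun i => measurableSet_Ioc
  set s : (Fin d → ℤ) → Set (Fin d → ℝ) := fun z => (fun x => x - zc z) ⁻¹' B with hs
  have hsm : ∀ z, MeasurableSet (s z) := fun z => (measurable_id.sub_const (zc z)) hBm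
  have hsd : Pairwise (Function.onFun Disjoint s) := by
    intro z z' hne
    rw [Function.onFun, Set.disjoint_left]
    intro x hx hx'
    apply hne
    ext i
    have h1 := hx i
    have h2 := hx' i
    simp only [Set.mem_Ioc, Pi.zero_apply, Pi.sub_apply, zc] at h1 h2
    have h3 : (z i : ℝ) < z' i + 1 := by linarith
    have h4 : (z' i : ℝ) < z i + 1 := by linarith
    have h3' : z i < z' i + 1 := by exact_mod_cast h3
    have h4' : z' i < z i + 1 := by exact_mod_cast h4
    omega
  have hsu : ⋃ z, s z = Set.univ := by
    rw [Set.eq_univ_iff_forall]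
    intro x
    rw [Set.mem_iUnion]
    refine ⟨fun i => ⌈x i⌉ - 1, fun i => ?_⟩
    simp only [Set.mem_Ioc, Pi.zero_apply, Pi.sub_apply, zc]
    push_cast
    have := Int.ceil_lt_add_one (x i)
    have := Int.le_ceil (x i)
    constructor <;> linarith
  have key : ∀ {E : Type} [NormedAddCommGroup E] [NormedSpace ℝ E] (h : (Fin d → ℝ) → E) (z : Fin d → ℤ),
      ∫ x in s z, h x = ∫ x in B, h (x + zc z) := by
    intro E _ _ h z
    have hmp : MeasurePreserving (fun x : Fin d → ℝ => x + zc z) volume volume :=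
      measurePreserving_add_right volume (zc z)
    rw [← hmp.setIntegral_preimage_emb (measurableEmbedding_addRight (zc z))]
    congr 2
    ext x; simp [hs]
  have h1 := hasSum_integral_iUnion hsm hsd (f := fun x => ‖f x‖) (μ := volume)
    (by rw [hsu]; exact hf.norm.integrableOn)
  have h2 := hasSum_integral_iUnion hsm hsd (f := f) (μ := volume)
    (by rw [hsu]; exact hf.integrableOn)
  simp only [key] at h1 h2
  rw [hsu, setIntegral_univ] at h2
  have h3 := hasSum_integral_of_summable_integral_norm (μ := volume.restrict B)
    (F := fun z x => f (x + zc z)) (fun z => (hf.comp_add_right (zc z)).integrableOn) h1.summable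
  exact h3.unique h2

theorem poisson {d : ℕ} (A : Matrix (Fin d) (Fin d) ℝ) (hA : A.det ≠ 0) (x : Fin d → ℝ) :
    HasSum (fun y : Fin d → ℤ => ((|A.det⁻¹| * gq (A⁻¹)ᵀ (zc y) : ℝ) : ℂ) *
      Complex.exp (2 * Real.pi * Complex.I * ((zc y ⬝ᵥ x : ℝ) : ℂ))) ((th A x : ℝ) : ℂ) := by
  have hq : IsOpenQuotientMap (Pi.map (fun (_ : Fin d) (t : ℝ) => (t : UnitAddCircle))) :=
    IsOpenQuotientMap.piMap fun i => QuotientAddGroup.isOpenQuotientMap_mk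
  let f0 : C(Fin d → ℝ, ℂ) := ⟨fun x => ((th A x : ℝ) : ℂ),
    Complex.continuous_ofReal.comp (th_continuous A hA)⟩
  have hlift : Function.FactorsThrough f0
      (Pi.map (fun (_ : Fin d) (t : ℝ) => (t : UnitAddCircle))) := by
    intro a b hab
    have : ∀ i, ∃ n : ℤ, a i = b i + n := by
      intro i
      have := congrFun hab i
      simp only [Pi.map_apply] at this
      rw [← sub_eq_zero, ← AddCircle.coe_sub, AddCircle.coe_eq_zero_iff] at this
      obtain ⟨n, hn⟩ := this
      refine ⟨n, ?_⟩
      simp at hn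
      linarith
    choose n hn using this
    have hab' : a = b + zc n := by ext i; simpa [zc] using hn i
    simp [f0, hab', th_periodic]
  set q := Pi.map (fun (_ : Fin d) (t : ℝ) => (t : UnitAddCircle)) with hqdef
  have hFq : ∀ a, f0 (Function.surjInv hq.surjective (q a)) = f0 a := fun a =>
    hlift (Function.surjInv_eq hq.surjective (q a))
  let F : C(UnitAddTorus (Fin d), ℂ) := ⟨fun t => f0 (Function.surjInv hq.surjective t), by
    rw [hq.isQuotientMap.continuous_iff]
    have : (fun t => f0 (Function.surjInv hq.surjective t)) ∘ q = f0 := funext hFq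
    rw [this]
    exact f0.continuous⟩
  have hF : ∀ a : Fin d → ℝ, F (fun i => (a i : UnitAddCircle)) = ((th A a : ℝ) : ℂ) := hFq
  have hcoef : ∀ y, UnitAddTorus.mFourierCoeff F y =
      ((|A.det⁻¹| * gq (A⁻¹)ᵀ (zc y) : ℝ) : ℂ) := by
    intro y
    obtain ⟨hi, he⟩ := gauss_fourier A hA y
    rw [UnitAddTorus.mFourierCoeff_eq_integral F y 0, ← he, ← box_unfold _ hi]
    congr 1
    ext a
    rw [hF, mFourier_coe, th, Complex.ofReal_tsum, smul_eq_mul, ← tsum_mul_left]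
    refine tsum_congr fun z => ?_
    congr 1
    rw [Complex.exp_eq_exp_iff_exists_int]
    refine ⟨∑ i, y i * z i, ?_⟩
    have h1 : zc (-y) ⬝ᵥ a = - (zc y ⬝ᵥ a) := by
      simp [zc, dotProduct]
    have h2 : zc y ⬝ᵥ zc z = ((∑ i, y i * z i : ℤ) : ℝ) := by
      simp [zc, dotProduct]
    rw [h1, dotProduct_add, h2]
    push_cast
    ring
  have hsum : Summable (UnitAddTorus.mFourierCoeff F) := by
    rw [funext hcoef]
    have hA' : ((A⁻¹)ᵀ).det ≠ 0 := by
      rw [det_transpose, det_nonsing_inv]; simpa using hA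
    have := (gq_summable (A⁻¹)ᵀ hA' 0).mul_left |A.det⁻¹|
    simp only [zero_add] at this
    exact Complex.ofRealCLM.summable this
  have := UnitAddTorus.hasSum_mFourier_series_apply_of_summable hsum
    (fun i => (x i : UnitAddCircle))
  simp only [hF, hcoef, mFourier_coe, smul_eq_mul] at this
  exact this

lemma det_dual_ne {d : ℕ} (A : Matrix (Fin d) (Fin d) ℝ) (hA : A.det ≠ 0) : ((A⁻¹)ᵀ).det ≠ 0 := by
  rw [det_transpose, det_nonsing_inv]; simpa using hA

lemma poisson_real {d : ℕ} (A : Matrix (Fin d) (Fin d) ℝ) (hA : A.det ≠ 0) (x : Fin d → ℝ) :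
    HasSum (fun y : Fin d → ℤ => |A.det⁻¹| * gq (A⁻¹)ᵀ (zc y) *
      Real.cos (2 * Real.pi * (zc y ⬝ᵥ x))) (th A x) := by
  have h := Complex.hasSum_re (poisson A hA x)
  simp only [Complex.ofReal_re] at h
  convert h using 2 with y
  rw [Complex.re_ofReal_mul]
  congr 1
  have : (2 * Real.pi * Complex.I * ((zc y ⬝ᵥ x : ℝ) : ℂ)) =
    ((2 * Real.pi * (zc y ⬝ᵥ x) : ℝ) : ℂ) * Complex.I := by push_cast; ring
  rw [this, Complex.exp_ofReal_mul_I_re]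

lemma poisson_zero {d : ℕ} (A : Matrix (Fin d) (Fin d) ℝ) (hA : A.det ≠ 0) :
    th A 0 = |A.det⁻¹| * th (A⁻¹)ᵀ 0 := by
  have h := poisson_real A hA 0
  simp only [dotProduct_zero, mul_zero, Real.cos_zero, mul_one] at h
  rw [← h.tsum_eq, th, tsum_mul_left]
  simp

lemma th_le {d : ℕ} (A : Matrix (Fin d) (Fin d) ℝ) (hA : A.det ≠ 0) (x : Fin d → ℝ) :
    th A x ≤ th A 0 := by
  refine hasSum_le (fun y => ?_) (poisson_real A hA x) (poisson_real A hA 0)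
  simp only [dotProduct_zero, mul_zero, Real.cos_zero]
  refine mul_le_mul_of_nonneg_left (Real.cos_le_one _) ?_
  exact mul_nonneg (abs_nonneg _) (gq_pos _ _).le

lemma th_ge {d : ℕ} (A : Matrix (Fin d) (Fin d) ℝ) (hA : A.det ≠ 0) (x : Fin d → ℝ) :
    |A.det⁻¹| * (2 - th (A⁻¹)ᵀ 0) ≤ th A x := by
  have h0 : HasSum (fun y : Fin d → ℤ => if y = 0 then 2 * |A.det⁻¹| else 0) (2 * |A.det⁻¹|) :=
    hasSum_ite_eq 0 _
  have h1 : HasSum (fun y : Fin d → ℤ => |A.det⁻¹| * gq (A⁻¹)ᵀ (zc y)) (|A.det⁻¹| * th (A⁻¹)ᵀ 0) := by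
    have := (gq_summable (A⁻¹)ᵀ (det_dual_ne A hA) 0).hasSum.mul_left |A.det⁻¹|
    simpa [th] using this
  have h2 := h0.sub h1
  have : |A.det⁻¹| * (2 - th (A⁻¹)ᵀ 0) = 2 * |A.det⁻¹| - |A.det⁻¹| * th (A⁻¹)ᵀ 0 := by ring
  rw [this]
  refine hasSum_le (fun y => ?_) h2 (poisson_real A hA x)
  have hk := abs_nonneg (A.det⁻¹)
  have hg := gq_pos (A⁻¹)ᵀ (zc y)
  split_ifs with hy
  · subst hy
    have hz : zc (0 : Fin d → ℤ) = 0 := by ext i; simp [zc]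
    simp [hz, gq]
    linarith
  · have := Real.neg_one_le_cos (2 * Real.pi * (zc y ⬝ᵥ x))
    have := mul_nonneg hk hg.le
    nlinarith

lemma tail {d : ℕ} (A : Matrix (Fin d) (Fin d) ℝ) (hA : A.det ≠ 0) (x u : Fin d → ℝ)
    (K t : ℝ) (hK : 0 < K) (hu : u ⬝ᵥ u ≤ K) (ht : 0 ≤ t) :
    ∑' z, Set.indicator {z : Fin d → ℤ | t ≤ u ⬝ᵥ (A *ᵥ (x + zc z))} (fun z => gq A (x + zc z)) z
      ≤ Real.exp (-Real.pi * t^2 / K) * th A 0 := by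
  set s := t / K with hs
  have hs0 : 0 ≤ s := by positivity
  set x' := x - s • (A⁻¹ *ᵥ u) with hx'
  have hpt : ∀ z, Set.indicator {z : Fin d → ℤ | t ≤ u ⬝ᵥ (A *ᵥ (x + zc z))}
      (fun z => gq A (x + zc z)) z ≤ Real.exp (-Real.pi * t^2 / K) * gq A (x' + zc z) := by
    intro z
    by_cases hz : t ≤ u ⬝ᵥ (A *ᵥ (x + zc z))
    · rw [Set.indicator_of_mem (by exact hz)]
      unfold gq
      rw [← Real.exp_add, Real.exp_le_exp]
      set v := A *ᵥ (x + zc z) with hv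
      have h1 : A *ᵥ (x' + zc z) = v - s • u := by
        rw [hx', hv, sub_add_eq_add_sub, mulVec_sub, mulVec_smul, mulVec_mulVec,
          mul_nonsing_inv _ (isUnit_iff_ne_zero.mpr hA), one_mulVec]
      rw [h1]
      simp only [sub_dotProduct, dotProduct_sub, smul_dotProduct, dotProduct_smul, smul_eq_mul]
      rw [dotProduct_comm v u]
      have hsK : t = s * K := by rw [hs]; field_simp
      have e1 : -Real.pi * t^2 / K = -Real.pi * (s * t) := by rw [hs]; ring
      rw [e1]
      have h2 : s * (s * (u ⬝ᵥ u)) ≤ s * t := by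
        rw [hsK]
        exact mul_le_mul_of_nonneg_left (mul_le_mul_of_nonneg_left hu hs0) hs0
      have h3 : s * t ≤ s * (u ⬝ᵥ v) := mul_le_mul_of_nonneg_left hz hs0
      have h4 : 0 ≤ -(s * t) + 2 * (s * (u ⬝ᵥ v)) - s * (s * (u ⬝ᵥ u)) := by linarith
      have := mul_nonneg Real.pi_pos.le h4
      linarith
    · rw [Set.indicator_of_notMem (by exact hz)]
      exact mul_nonneg (Real.exp_pos _).le (gq_pos _ _).le
  have hsum := (gq_summable A hA x').mul_left (Real.exp (-Real.pi * t^2 / K))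
  calc _ ≤ ∑' z, Real.exp (-Real.pi * t^2 / K) * gq A (x' + zc z) :=
        Summable.tsum_le_tsum hpt ((gq_summable A hA x).indicator _) hsum
    _ = Real.exp (-Real.pi * t^2 / K) * th A x' := by rw [tsum_mul_left, th]
    _ ≤ _ := mul_le_mul_of_nonneg_left (th_le A hA x') (Real.exp_pos _).le

lemma one_le_th {d : ℕ} (A : Matrix (Fin d) (Fin d) ℝ) (hA : A.det ≠ 0) : 1 ≤ th A 0 := by
  have := (gq_summable A hA 0).le_tsum (0 : Fin d → ℤ) (fun z _ => (gq_pos _ _).le)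
  have hz : zc (0 : Fin d → ℤ) = 0 := by ext i; simp [zc]
  simpa [th, hz, gq] using this

theorem core {d : ℕ} {ι : Type*} [Fintype ι] (A : Matrix (Fin d) (Fin d) ℝ) (hA : A.det ≠ 0)
    (u : ι → Fin d → ℝ) (K t1 t2 : ℝ) (hK : 0 < K) (hu : ∀ i, u i ⬝ᵥ u i ≤ K)
    (ht1 : 0 ≤ t1) (ht2 : 0 ≤ t2)
    (hw : ∀ y : Fin d → ℤ, y ≠ 0 → ∃ i, t2 ≤ |u i ⬝ᵥ ((A⁻¹)ᵀ *ᵥ zc y)|)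
    (h1 : Fintype.card ι * Real.exp (-Real.pi * t1^2 / K) ≤ 1/4)
    (h2 : Fintype.card ι * Real.exp (-Real.pi * t2^2 / K) ≤ 1/16) (m : Fin d → ℝ) :
    ∃ z : Fin d → ℤ, ∀ i, -t1 < u i ⬝ᵥ (A *ᵥ (m + zc z)) := by
  by_contra! hcon
  have hA' := det_dual_ne A hA
  -- the dual theta constant is close to one
  have hd : th (A⁻¹)ᵀ 0 - 1 ≤ 1/8 * th (A⁻¹)ᵀ 0 := by
    set D := (A⁻¹)ᵀ with hD
    have hs : ∀ (S : Set (Fin d → ℤ)), Summable (S.indicator (fun z => gq D (0 + zc z))) :=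
      fun S => (gq_summable D hA' 0).indicator S
    have e0 : HasSum (fun y : Fin d → ℤ => if y = 0 then (1:ℝ) else 0) 1 := hasSum_ite_eq 0 _
    have e1 : HasSum (fun y => gq D (0 + zc y)) (th D 0) := (gq_summable D hA' 0).hasSum
    have e2 := e1.sub e0
    set f : ι → (Fin d → ℤ) → ℝ := fun i z =>
      Set.indicator {z : Fin d → ℤ | t2 ≤ u i ⬝ᵥ (D *ᵥ (0 + zc z))} (fun z => gq D (0 + zc z)) z +
      Set.indicator {z : Fin d → ℤ | t2 ≤ (-u i) ⬝ᵥ (D *ᵥ (0 + zc z))} (fun z => gq D (0 + zc z)) z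
      with hf
    have e3 : HasSum (fun z => ∑ i, f i z) (∑ i, ∑' z, f i z) :=
      hasSum_sum fun i _ => ((hs _).add (hs _)).hasSum
    have hfnn : ∀ i z, 0 ≤ f i z := fun i z => add_nonneg
      (Set.indicator_nonneg (fun _ _ => (gq_pos _ _).le) _)
      (Set.indicator_nonneg (fun _ _ => (gq_pos _ _).le) _)
    have e4 : th D 0 - 1 ≤ ∑ i, ∑' z, f i z := by
      refine hasSum_le (fun z => ?_) e2 e3
      by_cases hz : z = 0
      · subst hz
        have hz : zc (0 : Fin d → ℤ) = 0 := by ext i; simp [zc]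
        refine le_trans (le_of_eq ?_) (Finset.sum_nonneg fun i _ => hfnn i _)
        simp [hz, gq]
      · obtain ⟨i, hi⟩ := hw z hz
        refine le_trans ?_ (Finset.single_le_sum (f := fun i => f i z) (fun i _ => hfnn i z)
          (Finset.mem_univ i))
        simp only [if_neg hz, sub_zero, hf]
        rcases le_abs.mp hi with h | h
        · rw [Set.indicator_of_mem (by simpa using h)]
          exact le_add_of_nonneg_right (Set.indicator_nonneg (fun _ _ => (gq_pos _ _).le) _)
        · refine le_add_of_nonneg_of_le (Set.indicator_nonneg (fun _ _ => (gq_pos _ _).le) _) ?_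
          rw [Set.indicator_of_mem (by simpa [neg_dotProduct] using h)]
    have e5 : ∀ i, ∑' z, f i z ≤ 2 * (Real.exp (-Real.pi * t2^2 / K) * th D 0) := by
      intro i
      rw [hf, Summable.tsum_add (hs _) (hs _), two_mul]
      refine add_le_add (tail D hA' 0 (u i) K t2 hK (hu i) ht2)
        (tail D hA' 0 (-u i) K t2 hK (by simpa using hu i) ht2)
    have e6 := e4.trans (Finset.sum_le_sum fun i _ => e5 i)
    rw [Finset.sum_const, nsmul_eq_mul, Finset.card_univ] at e6
    have := mul_le_mul_of_nonneg_right h2 (zero_le_one.trans (one_le_th D hA'))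
    nlinarith
  -- the primal sum
  have hp : th A m ≤ 1/4 * th A 0 := by
    have e1 : HasSum (fun z => gq A (m + zc z)) (th A m) := (gq_summable A hA m).hasSum
    set f : ι → (Fin d → ℤ) → ℝ := fun i z =>
      Set.indicator {z : Fin d → ℤ | t1 ≤ (-u i) ⬝ᵥ (A *ᵥ (m + zc z))} (fun z => gq A (m + zc z)) z
      with hf
    have hs : ∀ i, Summable (f i) := fun i => (gq_summable A hA m).indicator _
    have e3 : HasSum (fun z => ∑ i, f i z) (∑ i, ∑' z, f i z) :=
      hasSum_sum fun i _ => (hs i).hasSum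
    have e4 : th A m ≤ ∑ i, ∑' z, f i z := by
      refine hasSum_le (fun z => ?_) e1 e3
      obtain ⟨i, hi⟩ := hcon z
      refine le_trans ?_ (Finset.single_le_sum (f := fun i => f i z)
          (fun i _ => Set.indicator_nonneg (fun _ _ => (gq_pos _ _).le) _)
          (Finset.mem_univ i))
      simp only [hf]
      rw [Set.indicator_of_mem (by simp only [Set.mem_ofPred_eq, neg_dotProduct]; linarith)]
    have e5 : ∀ i, ∑' z, f i z ≤ Real.exp (-Real.pi * t1^2 / K) * th A 0 := fun i =>
      tail A hA m (-u i) K t1 hK (by simpa using hu i) ht1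
    have e6 := e4.trans (Finset.sum_le_sum fun i _ => e5 i)
    rw [Finset.sum_const, nsmul_eq_mul, Finset.card_univ] at e6
    have := mul_le_mul_of_nonneg_right h1 (zero_le_one.trans (one_le_th A hA))
    nlinarith
  have hg := th_ge A hA m
  have h0 := poisson_zero A hA
  have hk : 0 < |A.det⁻¹| := abs_pos.mpr (inv_ne_zero hA)
  have h1' := one_le_th _ hA'
  rw [h0] at hp
  have h3 : |A.det⁻¹| * (2 - th (A⁻¹)ᵀ 0) ≤ |A.det⁻¹| * (1/4 * th (A⁻¹)ᵀ 0) := by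
    linarith
  have h4 := le_of_mul_le_mul_left h3 hk
  linarith

/-- weighted mean -/
def wmean {d : ℕ} {ι : Type*} [Fintype ι] (x : ι → Fin d → ℝ) (c : ι → ℝ) : Fin d → ℝ :=
  fun a => ∑ i, c i * x i a

/-- weighted covariance matrix -/
def wcov {d : ℕ} {ι : Type*} [Fintype ι] (x : ι → Fin d → ℝ) (c : ι → ℝ) :
    Matrix (Fin d) (Fin d) ℝ :=
  Matrix.of fun a b => ∑ i, c i * (x i a * x i b) - wmean x c a * wmean x c b

lemma wcov_continuous {d : ℕ} {ι : Type*} [Fintype ι] (x : ι → Fin d → ℝ) :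
    Continuous (fun c => (wcov x c).det) := by
  refine Continuous.matrix_det ?_
  refine continuous_matrix fun a b => ?_
  simp only [wcov, wmean, Matrix.of_apply]
  fun_prop

lemma wcov_mulVec {d : ℕ} {ι : Type*} [Fintype ι] (x : ι → Fin d → ℝ) (c : ι → ℝ)
    (hc : ∑ i, c i = 1) (q : Fin d → ℝ) :
    wcov x c *ᵥ q = ∑ i, (c i * ((x i - wmean x c) ⬝ᵥ q)) • (x i - wmean x c) := by
  set m := wmean x c with hm
  have h0 : ∑ i, (c i * ((x i - m) ⬝ᵥ q)) = 0 := by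
    simp only [sub_dotProduct, mul_sub, Finset.sum_sub_distrib, ← Finset.sum_mul, hc]
    have : ∑ i, c i * (x i ⬝ᵥ q) = m ⬝ᵥ q := by
      simp only [hm, wmean, dotProduct, Finset.sum_mul, Finset.mul_sum]
      rw [Finset.sum_comm]
      refine Finset.sum_congr rfl fun _ _ => Finset.sum_congr rfl fun _ _ => by ring
    rw [this]; ring
  simp only [smul_sub, Finset.sum_sub_distrib, ← Finset.sum_smul, h0, zero_smul, sub_zero]
  ext a
  simp only [Finset.sum_apply, Pi.smul_apply, smul_eq_mul, mulVec, dotProduct, wcov, Matrix.of_apply,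
    ← hm, Pi.sub_apply, sub_mul, Finset.sum_sub_distrib, mul_sub]
  congr 1
  · simp only [Finset.sum_mul, Finset.mul_sum]
    rw [Finset.sum_comm]
    refine Finset.sum_congr rfl fun _ _ => Finset.sum_congr rfl fun _ _ => by ring
  · have : ∀ i, c i * (∑ j, m j * q j) * x i a = (c i * x i a) * ∑ j, m j * q j := fun i => by ring
    simp only [this, ← Finset.sum_mul]
    rw [show ∑ i, c i * x i a = m a from rfl, Finset.mul_sum]
    refine Finset.sum_congr rfl fun _ _ => by ring

lemma wcov_quad {d : ℕ} {ι : Type*} [Fintype ι] (x : ι → Fin d → ℝ) (c : ι → ℝ)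
    (hc : ∑ i, c i = 1) (q : Fin d → ℝ) :
    q ⬝ᵥ (wcov x c *ᵥ q) = ∑ i, c i * ((x i - wmean x c) ⬝ᵥ q)^2 := by
  rw [wcov_mulVec x c hc, dotProduct_sum]
  refine Finset.sum_congr rfl fun i _ => ?_
  rw [dotProduct_smul, dotProduct_comm q, smul_eq_mul]; ring

lemma wcov_symm {d : ℕ} {ι : Type*} [Fintype ι] (x : ι → Fin d → ℝ) (c : ι → ℝ) :
    (wcov x c).IsHermitian := by
  ext a b
  simp [wcov, conjTranspose, mul_comm]

lemma wcov_psd {d : ℕ} {ι : Type*} [Fintype ι] (x : ι → Fin d → ℝ) (c : ι → ℝ)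
    (hc0 : ∀ i, 0 ≤ c i) (hc : ∑ i, c i = 1) : (wcov x c).PosSemidef := by
  refine PosSemidef.of_dotProduct_mulVec_nonneg (wcov_symm x c) fun q => ?_
  rw [star_trivial, wcov_quad x c hc]
  exact Finset.sum_nonneg fun i _ => mul_nonneg (hc0 i) (sq_nonneg _)

lemma wcov_mix {d : ℕ} {ι : Type*} [Fintype ι] [DecidableEq ι] (x : ι → Fin d → ℝ) (c : ι → ℝ)
    (k : ι) (e : ℝ) :
    wcov x (fun i => (1 - e) * c i + e * (if i = k then 1 else 0)) =
      (1 - e) • (wcov x c + vecMulVec (e • (x k - wmean x c)) (x k - wmean x c)) := by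
  have h : ∀ f : ι → ℝ, ∑ i, ((1 - e) * c i + e * (if i = k then 1 else 0)) * f i =
      (1 - e) * ∑ i, c i * f i + e * f k := by
    intro f
    simp only [add_mul, Finset.sum_add_distrib, mul_assoc, ← Finset.mul_sum]
    simp
  ext a b
  simp only [wcov, Matrix.of_apply, wmean, Matrix.smul_apply, Matrix.add_apply, vecMulVec_apply,
    Pi.smul_apply, Pi.sub_apply, smul_eq_mul]
  rw [h (fun i => x i a * x i b), h (fun i => x i a), h (fun i => x i b)]
  ring

theorem design {d : ℕ} {ι : Type*} [Fintype ι] [Nonempty ι] (x : ι → Fin d → ℝ)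
    (hspan : ∀ v : Fin d → ℝ, v ≠ 0 → ¬ ∃ c : ℝ, ∀ i, x i ⬝ᵥ v = c) :
    ∃ c : ι → ℝ, (∀ i, 0 ≤ c i) ∧ ∑ i, c i = 1 ∧ (wcov x c).PosDef ∧
      ∀ i, (x i - wmean x c) ⬝ᵥ ((wcov x c)⁻¹ *ᵥ (x i - wmean x c)) ≤ d := by
  classical
  obtain ⟨c, hc, hmax⟩ := (isCompact_stdSimplex ℝ ι).exists_isMaxOn
    (⟨Pi.single (Classical.arbitrary ι) 1, single_mem_stdSimplex ℝ _⟩ : (stdSimplex ℝ ι).Nonempty)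
    (wcov_continuous x).continuousOn
  obtain ⟨hc0, hc1⟩ := hc
  -- positivity of the maximum
  have hpos : 0 < (wcov x c).det := by
    set N : ℝ := (Fintype.card ι : ℝ) with hN
    have hN0 : 0 < N := by rw [hN]; exact_mod_cast Fintype.card_pos
    set c0 : ι → ℝ := fun _ => N⁻¹ with hc0def
    have h1 : ∑ i, c0 i = 1 := by
      simp only [hc0def, Finset.sum_const, Finset.card_univ, nsmul_eq_mul, ← hN]
      field_simp
    have hmem : c0 ∈ stdSimplex ℝ ι := ⟨fun i => by simp only [hc0def]; positivity, h1⟩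
    have hpd : (wcov x c0).PosDef := by
      refine PosDef.of_dotProduct_mulVec_pos (wcov_symm x c0) fun q hq => ?_
      rw [star_trivial, wcov_quad x c0 h1]
      have hnn : ∀ i, 0 ≤ c0 i * ((x i - wmean x c0) ⬝ᵥ q)^2 := fun i =>
        mul_nonneg (hmem.1 i) (sq_nonneg _)
      rcases (Finset.sum_nonneg fun i (_ : i ∈ Finset.univ) => hnn i).lt_or_eq with h | h
      · exact h
      · exfalso
        refine hspan q hq ⟨wmean x c0 ⬝ᵥ q, fun i => ?_⟩
        have := (Finset.sum_eq_zero_iff_of_nonneg fun i _ => hnn i).mp h.symm i (Finset.mem_univ i)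
        have h3 : c0 i ≠ 0 := by simp only [hc0def]; positivity
        have h4 : (x i - wmean x c0) ⬝ᵥ q = 0 := by simpa [h3] using this
        rw [sub_dotProduct] at h4
        linarith
    exact hpd.det_pos.trans_le (hmax hmem)
  refine ⟨c, hc0, hc1, (wcov_psd x c hc0 hc1).posDef_iff_det_ne_zero.mpr hpos.ne', fun k => ?_⟩
  set v := x k - wmean x c with hv
  set Q := v ⬝ᵥ ((wcov x c)⁻¹ *ᵥ v) with hQ
  have key : ∀ e : ℝ, 0 < e → e < 1 → (1 - e)^d * (1 + e * Q) ≤ 1 := by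
    intro e he he1
    have hmem : (fun i => (1 - e) * c i + e * (if i = k then 1 else 0)) ∈ stdSimplex ℝ ι := by
      refine ⟨fun i => ?_, ?_⟩
      · have := mul_nonneg (sub_nonneg.mpr he1.le) (hc0 i)
        show 0 ≤ (1 - e) * c i + e * (if i = k then 1 else 0)
        split_ifs <;> linarith
      · simp only [Finset.sum_add_distrib, ← Finset.mul_sum, hc1]
        simp
    have h := hmax hmem
    simp only [Set.mem_ofPred_eq] at h
    rw [wcov_mix, det_smul, vecMulVec_eq Unit, det_add_replicateCol_mul_replicateRow
      (isUnit_iff_ne_zero.mpr hpos.ne')] at h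
    have h2 : (1 + replicateRow Unit (x k - wmean x c) * (wcov x c)⁻¹ *
        replicateCol Unit (e • (x k - wmean x c))).det = 1 + e * Q := by
      rw [det_unique]
      simp only [Matrix.add_apply, Matrix.one_apply_eq]
      rw [Matrix.mul_assoc, Matrix.mul_apply', hQ, ← hv]
      congr 1
      rw [← smul_eq_mul, ← dotProduct_smul, ← mulVec_smul]
      congr 1
    rw [h2, Fintype.card_fin] at h
    have h3 : (wcov x c).det * ((1 - e)^d * (1 + e * Q)) ≤ (wcov x c).det * 1 := by linarith
    exact le_of_mul_le_mul_left h3 hpos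
  by_contra! hlt
  have hd0 : (0:ℝ) ≤ d := Nat.cast_nonneg d
  have hQ0 : 0 < Q := hd0.trans_lt hlt
  -- choose e small
  set e : ℝ := min (1/2) ((Q - d) / (2 * (d * Q + 1))) with he
  have hdQ : 0 ≤ d * Q := mul_nonneg hd0 hQ0.le
  have he0 : 0 < e := lt_min (by norm_num) (div_pos (by linarith) (by linarith))
  have he1 : e < 1 := (min_le_left _ _).trans_lt (by norm_num)
  have h1 := key e he0 he1
  have h2 : 1 + (d:ℝ) * (-e) ≤ (1 + (-e))^d := one_add_mul_le_pow (by linarith) d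
  have h3 : (1 + (d:ℝ) * (-e)) * (1 + e * Q) ≤ 1 := by
    refine le_trans (mul_le_mul_of_nonneg_right h2 (by positivity)) ?_
    rw [← sub_eq_add_neg]; exact h1
  have h4 : e * (2 * (d * Q + 1)) ≤ Q - d := by
    rw [← le_div_iff₀ (by linarith)]; exact min_le_right _ _
  have h5 : e * (Q - d - e * (d * Q)) ≤ 0 := by nlinarith
  have h6 : Q - d - e * (d * Q) ≤ 0 := by
    by_contra! h
    nlinarith
  nlinarith

section
open scoped MatrixOrder

lemma psd_factor {d : ℕ} (M : Matrix (Fin d) (Fin d) ℝ) (hM : M.PosSemidef) :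
    ∃ T : Matrix (Fin d) (Fin d) ℝ, M = Tᵀ * T := by
  obtain ⟨B, hB⟩ := CStarAlgebra.nonneg_iff_eq_star_mul_self.mp hM.nonneg
  exact ⟨B, by rw [hB, star_eq_conjTranspose, conjTranspose_eq_transpose_of_trivial]⟩

end

theorem flat {d : ℕ} (hd : 0 < d) {ι : Type*} [Fintype ι] [Nonempty ι] (x : ι → Fin d → ℝ)
    (hspan : ∀ v : Fin d → ℝ, v ≠ 0 → ¬ ∃ c : ℝ, ∀ i, x i ⬝ᵥ v = c) (W : ℝ)
    (hwidth : ∀ y : Fin d → ℤ, y ≠ 0 → ∃ i j, W ≤ x i ⬝ᵥ zc y - x j ⬝ᵥ zc y)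
    (hW : d * Real.log (16 * Fintype.card ι) ≤ W) :
    ∃ z : Fin d → ℤ, zc z ∈ interior (convexHull ℝ (Set.range x)) := by
  obtain ⟨c, hc0, hc1, hpd, hlev⟩ := design x hspan
  set m := wmean x c with hm
  set M := wcov x c with hM
  obtain ⟨T, hT⟩ := psd_factor M⁻¹ hpd.inv.posSemidef
  have hMdet : M.det ≠ 0 := hpd.det_pos.ne'
  have hTdet : T.det ≠ 0 := by
    intro h
    have := hpd.inv.det_pos.ne'
    rw [hT, det_mul, h] at this
    simp at this
  have hdR : (0:ℝ) < d := by exact_mod_cast hd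
  set N : ℝ := (Fintype.card ι : ℝ) with hN
  have hN1 : 1 ≤ N := by rw [hN]; exact_mod_cast Fintype.card_pos
  set L := Real.log (16 * N) with hL
  have hL0 : 0 < L := Real.log_pos (by linarith)
  have hexpL : Real.exp (-L) = (16 * N)⁻¹ := by
    rw [Real.exp_neg, hL, Real.exp_log (by linarith)]
  set r := Real.sqrt (d * L / Real.pi) with hr
  have hr2 : r ^ 2 = d * L / Real.pi := Real.sq_sqrt (by positivity)
  have hr0 : 0 < r := Real.sqrt_pos.mpr (by positivity)
  have hAdet : (r • T).det ≠ 0 := by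
    rw [det_smul]; exact mul_ne_zero (pow_ne_zero _ hr0.ne') hTdet
  have hTT : ∀ p w : Fin d → ℝ, (T *ᵥ p) ⬝ᵥ (T *ᵥ w) = p ⬝ᵥ (M⁻¹ *ᵥ w) := by
    intro p w
    rw [hT, ← mulVec_mulVec, mulVec_transpose, dotProduct_comm p, ← dotProduct_mulVec,
      dotProduct_comm]
  obtain ⟨z, hz⟩ := core (r • T) hAdet (fun i => T *ᵥ (x i - m)) d r (W / (2 * r)) hdR
    (fun i => by rw [hTT]; exact hlev i) hr0.le
    (by
      have : 0 ≤ W := le_trans (by positivity) hW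
      positivity)
    (by
      intro y hy
      have e1 : ∀ i, (T *ᵥ (x i - m)) ⬝ᵥ (((r • T)⁻¹)ᵀ *ᵥ zc y) = r⁻¹ * (x i ⬝ᵥ zc y - m ⬝ᵥ zc y) := by
        intro i
        have : T *ᵥ (x i - m) = r⁻¹ • ((r • T) *ᵥ (x i - m)) := by
          rw [smul_mulVec, smul_smul, inv_mul_cancel₀ hr0.ne', one_smul]
        rw [this, smul_dotProduct, mulVec_transpose, dotProduct_comm, ← dotProduct_mulVec,
          mulVec_mulVec, nonsing_inv_mul _ (isUnit_iff_ne_zero.mpr hAdet), one_mulVec,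
          dotProduct_comm, sub_dotProduct, smul_eq_mul]
      obtain ⟨i, j, hij⟩ := hwidth y hy
      have hdiv : W / (2 * r) = r⁻¹ * (W / 2) := by field_simp
      have hri : 0 < r⁻¹ := inv_pos.mpr hr0
      by_cases h : W / 2 ≤ x i ⬝ᵥ zc y - m ⬝ᵥ zc y
      · refine ⟨i, ?_⟩
        rw [e1, hdiv]
        exact (mul_le_mul_of_nonneg_left h hri.le).trans (le_abs_self _)
      · refine ⟨j, ?_⟩
        rw [e1, hdiv]
        refine le_trans ?_ (neg_le_abs _)
        rw [← mul_neg]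
        exact mul_le_mul_of_nonneg_left (by linarith) hri.le)
    (by
      have : -Real.pi * r ^ 2 / d = -L := by
        rw [hr2]; field_simp
      rw [this, hexpL, ← hN]
      have : N * (16 * N)⁻¹ = 1/16 := by field_simp
      rw [this]; norm_num)
    (by
      have h1 : -Real.pi * (W / (2 * r)) ^ 2 / d ≤ -L := by
        rw [div_pow, mul_pow, hr2]
        have : -Real.pi * (W ^ 2 / (2 ^ 2 * (d * L / Real.pi))) / d =
          -(Real.pi ^ 2 * W ^ 2 / (4 * d ^ 2 * L)) := by field_simp; norm_num
        rw [this, neg_le_neg_iff, le_div_iff₀ (by positivity)]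
        have h2 : (d * L)^2 ≤ W^2 := pow_le_pow_left₀ (by positivity) hW 2
        have h3 : (4:ℝ) ≤ Real.pi ^ 2 := by nlinarith [Real.pi_gt_three]
        have h4 : 4 * (d * L)^2 ≤ Real.pi ^ 2 * W^2 := mul_le_mul h3 h2 (by positivity) (by positivity)
        linarith
      have h2 := Real.exp_le_exp.mpr h1
      rw [hexpL] at h2
      rw [← hN]
      calc _ ≤ N * (16 * N)⁻¹ := mul_le_mul_of_nonneg_left h2 (by linarith)
        _ = 1/16 := by field_simp)
    (-m)
  refine ⟨z, ?_⟩
  set O : Set (Fin d → ℝ) := {p | ∀ i, -1 < (x i - m) ⬝ᵥ (M⁻¹ *ᵥ (p - m))} with hO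
  have hOo : IsOpen O := by
    have : O = ⋂ i, {p | -1 < (x i - m) ⬝ᵥ (M⁻¹ *ᵥ (p - m))} := by ext; simp [hO]
    rw [this]
    exact isOpen_iInter_of_finite fun i => isOpen_lt continuous_const (by fun_prop)
  refine interior_maximal ?_ hOo ?_
  · intro p hp
    set q := M⁻¹ *ᵥ (p - m) with hq
    have hMq : M *ᵥ q = p - m := by
      rw [hq, mulVec_mulVec, mul_nonsing_inv _ (isUnit_iff_ne_zero.mpr hMdet), one_mulVec]
    have hm' : ∑ i, c i • x i = m := by
      ext a; simp [hm, wmean]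
    have hz0 : ∑ i, c i * ((x i - m) ⬝ᵥ q) = 0 := by
      have : ∑ i, c i * ((x i - m) ⬝ᵥ q) = (∑ i, c i • (x i - m)) ⬝ᵥ q := by
        rw [sum_dotProduct]; simp
      rw [this]
      simp [smul_sub, hm', ← Finset.sum_smul, hc1]
    have hsum1 : ∑ i, c i * (1 + (x i - m) ⬝ᵥ q) = 1 := by
      simp only [mul_add, mul_one, Finset.sum_add_distrib, hc1, hz0, add_zero]
    have hp' : p = ∑ i, (c i * (1 + (x i - m) ⬝ᵥ q)) • x i := by
      have h1 := wcov_mulVec x c hc1 q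
      rw [← hM, ← hm, hMq] at h1
      simp only [smul_sub, Finset.sum_sub_distrib, ← Finset.sum_smul, hz0, zero_smul, sub_zero] at h1
      simp only [mul_add, mul_one, add_smul, Finset.sum_add_distrib, hm', ← h1]
      abel
    rw [hp']
    refine (convex_convexHull ℝ _).sum_mem (fun i _ => ?_) hsum1
      (fun i _ => subset_convexHull ℝ _ ⟨i, rfl⟩)
    have := hp i
    exact mul_nonneg (hc0 i) (by linarith)
  · intro i
    have := hz i
    rw [smul_mulVec, dotProduct_smul, hTT, smul_eq_mul, neg_add_eq_sub] at this
    by_contra! h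
    nlinarith

lemma width_of_gp {d : ℕ} (hd : 0 < d) (X : Finset (Fin d → ℝ))
    (hX : (X : Set (Fin d → ℝ)) ⊆ latticePoints d) (hgp : InGeneralPosition d X)
    (hne : X.Nonempty) (y : Fin d → ℤ) (hy : y ≠ 0) :
    ∃ i ∈ X, ∃ j ∈ X, (X.card : ℝ) / d - 1 ≤ i ⬝ᵥ zc y - j ⬝ᵥ zc y := by
  classical
  have hint : ∀ p : Fin d → ℝ, ∃ n : ℤ, p ∈ X → p ⬝ᵥ zc y = n := by
    intro p
    by_cases hp : p ∈ X
    · choose a ha using hX hp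
      refine ⟨∑ i, a i * y i, fun _ => ?_⟩
      simp [dotProduct, zc, ha]
    · exact ⟨0, fun h => absurd h hp⟩
  choose f hf using hint
  have hcard : X.card ≤ d * (X.image f).card := by
    refine Finset.card_le_mul_card_image X d fun b _ => ?_
    by_contra! hlt
    obtain ⟨s, hs, hsc⟩ := Finset.exists_subset_card_eq (Nat.succ_le_of_lt hlt)
    have hsX : s ⊆ X := hs.trans (Finset.filter_subset _ _)
    refine hgp s hsX hsc ⟨zc y, ?_, b, fun p hp => ?_⟩
    · intro h
      apply hy
      ext i
      have := congrFun h i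
      simpa [zc] using this
    · have h1 := hf p (hsX hp)
      have h2 := (Finset.mem_filter.mp (hs hp)).2
      rw [h2] at h1
      exact h1
  obtain ⟨i, hi, himax⟩ := X.exists_max_image f hne
  obtain ⟨j, hj, hjmin⟩ := X.exists_min_image f hne
  refine ⟨i, hi, j, hj, ?_⟩
  have hsub : X.image f ⊆ Finset.Icc (f j) (f i) := by
    intro b hb
    obtain ⟨p, hp, rfl⟩ := Finset.mem_image.mp hb
    exact Finset.mem_Icc.mpr ⟨hjmin p hp, himax p hp⟩
  have h1 := Finset.card_le_card hsub
  rw [Int.card_Icc] at h1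
  have h2 : ((X.image f).card : ℤ) ≤ f i + 1 - f j := by
    have := himax j hj
    omega
  have h3 : ((X.image f).card : ℝ) ≤ f i + 1 - f j := by exact_mod_cast h2
  have h4 : (X.card : ℝ) ≤ d * (X.image f).card := by exact_mod_cast hcard
  have hdR : (0:ℝ) < d := by exact_mod_cast hd
  rw [hf i hi, hf j hj]
  have h5 : (X.card : ℝ) / d ≤ (X.image f).card := by
    rw [div_le_iff₀ hdR]; linarith
  linarith

lemma log_bound (d L : ℕ) (hL : 1 ≤ L) (hdL : d < 2 ^ L) (hd : 0 < d) :
    Real.log (16 * ((100 * d ^ 2 * L : ℕ) : ℝ)) ≤ 14 * L := by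
  have h1 : 16 * (100 * d ^ 2 * L) ≤ 2 ^ (14 * L) := by
    have a1 : L ≤ 2 ^ L := Nat.lt_two_pow_self.le
    have a2 : d ^ 2 ≤ (2 ^ L) ^ 2 := Nat.pow_le_pow_left hdL.le 2
    have a3 : 1600 ≤ (2 ^ L) ^ 11 := by
      calc 1600 ≤ (2 ^ 1) ^ 11 := by norm_num
        _ ≤ (2 ^ L) ^ 11 := Nat.pow_le_pow_left (Nat.pow_le_pow_right (by norm_num) hL) 11
    calc 16 * (100 * d ^ 2 * L) = 1600 * d ^ 2 * L := by ring
      _ ≤ (2 ^ L) ^ 11 * (2 ^ L) ^ 2 * 2 ^ L := Nat.mul_le_mul (Nat.mul_le_mul a3 a2) a1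
      _ = 2 ^ (14 * L) := by rw [mul_comm 14 L, pow_mul]; ring
  have h2 : 16 * ((100 * d ^ 2 * L : ℕ) : ℝ) ≤ 2 ^ (14 * L) := by exact_mod_cast h1
  have h3 : (0:ℝ) < 16 * ((100 * d ^ 2 * L : ℕ) : ℝ) := by positivity
  refine (Real.log_le_log h3 h2).trans ?_
  rw [Real.log_pow]
  push_cast
  have : Real.log 2 ≤ 1 := by linarith [Real.log_two_lt_d9]
  have : (0:ℝ) ≤ 14 * L := by positivity
  nlinarith

lemma card_lt {d L : ℕ} (hd : 2 ≤ d) (hL : 1 ≤ L) (hdL : d < 2 ^ L) (X : Finset (Fin d → ℝ))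
    (hX : (X : Set (Fin d → ℝ)) ⊆ latticePoints d) (hgp : InGeneralPosition d X)
    (hh : interior (convexHull ℝ (X : Set (Fin d → ℝ))) ∩ latticePoints d = ∅) :
    X.card < 100 * d ^ 2 * L := by
  by_contra! hle
  obtain ⟨Y, hYX, hYc⟩ := Finset.exists_subset_card_eq hle
  have hYl : (Y : Set (Fin d → ℝ)) ⊆ latticePoints d := fun p hp => hX (hYX hp)
  have hYg : InGeneralPosition d Y := fun s hs => hgp s (hs.trans hYX)
  have hYd : d + 1 ≤ Y.card := by rw [hYc]; nlinarith
  have hYne : Y.Nonempty := Finset.card_pos.mp (by omega)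
  haveI : Nonempty Y := hYne.to_subtype
  obtain ⟨z, hz⟩ := flat (by omega) (fun i : Y => (i : Fin d → ℝ))
    (by
      rintro v hv ⟨c, hc⟩
      obtain ⟨s, hs, hsc⟩ := Finset.exists_subset_card_eq hYd
      exact hYg s hs hsc ⟨v, hv, c, fun p hp => hc ⟨p, hs hp⟩⟩)
    ((Y.card : ℝ) / d - 1)
    (by
      intro y hy
      obtain ⟨i, hi, j, hj, hij⟩ := width_of_gp (by omega) Y hYl hYg hYne y hy
      exact ⟨⟨i, hi⟩, ⟨j, hj⟩, hij⟩)
    (by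
      rw [Fintype.card_coe, hYc]
      have hlog := log_bound d L hL hdL (by omega)
      have hdR : (2:ℝ) ≤ d := by exact_mod_cast hd
      have hLR : (1:ℝ) ≤ L := by exact_mod_cast hL
      have h1 : ((100 * d ^ 2 * L : ℕ) : ℝ) / d = 100 * d * L := by
        push_cast; field_simp
      rw [h1]
      have h2 := mul_le_mul_of_nonneg_left hlog (show (0:ℝ) ≤ d by linarith)
      have h3 : (1:ℝ) ≤ d * L := by nlinarith
      nlinarith)
  have hsub : Set.range (fun i : Y => (i : Fin d → ℝ)) ⊆ (X : Set (Fin d → ℝ)) := by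
    rintro _ ⟨i, rfl⟩
    exact hYX i.2
  have : zc z ∈ interior (convexHull ℝ (X : Set (Fin d → ℝ))) ∩ latticePoints d :=
    ⟨interior_mono (convexHull_mono hsub) hz, fun i => ⟨z i, rfl⟩⟩
  rw [hh] at this
  exact this

end helpers

/-- There is an absolute constant `C > 0` such that for every `d ≥ 2`, a
hollow lattice polytope in `ℝ^d` whose vertex set `X` is in general position satisfies
`|X| ≤ C · d² · (log d)³`. -/
theorem hollow_general_position_card_le :
    ∃ C : ℝ, 0 < C ∧ ∀ d : ℕ, 2 ≤ d → ∀ X : Finset (Fin d → ℝ),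
      (X : Set (Fin d → ℝ)) ⊆ latticePoints d →
      InGeneralPosition d X →
      (∀ x ∈ X, x ∈ Set.extremePoints ℝ (convexHull ℝ (X : Set (Fin d → ℝ)))) →
      interior (convexHull ℝ (X : Set (Fin d → ℝ))) ∩ latticePoints d = ∅ →
      (X.card : ℝ) ≤ C * d ^ 2 * (Real.log d) ^ 3 := by
  refine ⟨1000, by norm_num, fun d hd X hX hgp _ hh => ?_⟩
  have hd0 : d ≠ 0 := by omega
  have hlt := card_lt hd (Nat.succ_le_succ (Nat.zero_le _)) (Nat.lt_pow_succ_log_self (by norm_num) d)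
    X hX hgp hh
  set k := Nat.log 2 d with hk
  have h1 : (X.card : ℝ) ≤ 100 * (d:ℝ) ^ 2 * (k + 1) := by exact_mod_cast hlt.le
  have hdR : (2:ℝ) ≤ d := by exact_mod_cast hd
  set l := Real.log d with hl
  have hl2 : Real.log 2 ≤ l := Real.log_le_log (by norm_num) hdR
  have hlow : 0.69 ≤ l := by linarith [Real.log_two_gt_d9]
  have hkl : (k:ℝ) * Real.log 2 ≤ l := by
    rw [← Real.log_pow]
    refine Real.log_le_log (by positivity) ?_
    exact_mod_cast Nat.pow_log_le_self 2 hd0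
  have hk0 : (0:ℝ) ≤ k := Nat.cast_nonneg k
  have hkl' : (k:ℝ) * 0.69 ≤ l := by nlinarith [Real.log_two_gt_d9]
  have h2 : (k:ℝ) + 1 ≤ 3 * l := by linarith
  have hsq : (0.4 : ℝ) ≤ l ^ 2 := by nlinarith
  have h3 : l ≤ 2.5 * l ^ 3 := by
    have : l ^ 3 = l * l ^ 2 := by ring
    rw [this]; nlinarith
  have h4 : (k:ℝ) + 1 ≤ 10 * l ^ 3 := by nlinarith
  calc (X.card : ℝ) ≤ 100 * (d:ℝ) ^ 2 * (k + 1) := h1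
    _ ≤ 100 * (d:ℝ) ^ 2 * (10 * l ^ 3) := mul_le_mul_of_nonneg_left h4 (by positivity)
    _ = 1000 * (d:ℝ) ^ 2 * l ^ 3 := by ring
end

section
/- For every d ≥ 3 and every integer n ≥ 3, there exists a finite set S ⊆ Z^d with exactly n + d - 2 points such that every point of S is an extreme point of conv(S) and the interior of conv(S) contains no point of Z^d. In particular, for d ≥ 3 there exist hollow lattice polytopes in Z^d with arbitrarily many vertices. -/
/-- A point of `S` that strictly maximises a linear functional over `S` is extreme. -/
theorem extreme_of_strict_max {E : Type*} [AddCommGroup E] [Module ℝ E] (S : Set E) (x : E)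
    (hx : x ∈ S) (f : E →ₗ[ℝ] ℝ) (hf : ∀ y ∈ S, y ≠ x → f y < f x) :
    x ∈ Set.extremePoints ℝ (convexHull ℝ S) := by
  have hconv : Convex ℝ {y : E | y = x ∨ f y < f x} := by
    intro y hy z hz a b ha hb hab
    simp only [Set.mem_ofPred_eq, map_add, map_smul, smul_eq_mul] at *
    rcases eq_or_lt_of_le ha with rfl | ha
    · have : b = 1 := by linarith
      subst this; simpa using hz
    rcases eq_or_lt_of_le hb with rfl | hb
    · have : a = 1 := by linarith
      subst this; simpa using hy
    have hb' : b = 1 - a := by linarith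
    rcases hy with rfl | hy
    · rcases hz with rfl | hz
      · left; rw [← add_smul, hab, one_smul]
      · right; subst hb'; nlinarith
    · right
      have hz' : f z ≤ f x := by
        rcases hz with rfl | hz
        · exact le_rfl
        · exact hz.le
      subst hb'; nlinarith
  have hsub : convexHull ℝ S ⊆ {y : E | y = x ∨ f y < f x} :=
    convexHull_min (fun y hy => by
      by_cases h : y = x
      · exact Or.inl h
      · exact Or.inr (hf y hy h)) hconv
  rw [mem_extremePoints_iff_left]
  refine ⟨subset_convexHull ℝ S hx, ?_⟩
  rintro y hy z hz ⟨a, b, ha, hb, hab, hxy⟩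
  have e : a * f y + b * f z = f x := by rw [← hxy]; simp
  have hb' : b = 1 - a := by linarith
  rcases hsub hy with h | h
  · exact h
  · exfalso
    have hz' : f z ≤ f x := by
      rcases hsub hz with rfl | hz
      · exact le_rfl
      · exact hz.le
    subst hb'; nlinarith

/-- The vertices: `(i, i², 0)` for `i < n`, and the unit vectors of the last coordinates. -/
noncomputable def pyrPt (n m : ℕ) : Fin n ⊕ Fin (m + 1) → (Fin (m + 3) → ℝ)
  | Sum.inl i => Fin.cons ((i : ℕ) : ℝ) (Fin.cons (((i : ℕ) : ℝ) ^ 2) 0)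
  | Sum.inr k => Fin.cons 0 (Fin.cons 0 (Pi.single k 1))

theorem pyrPt_sep (n m : ℕ) (s : Fin n ⊕ Fin (m + 1)) :
    ∃ f : (Fin (m + 3) → ℝ) →ₗ[ℝ] ℝ, ∀ t, t ≠ s → f (pyrPt n m t) < f (pyrPt n m s) := by
  rcases s with i | k
  · refine ⟨(2 * ((i : ℕ) : ℝ)) • LinearMap.proj 0 - LinearMap.proj (Fin.succ 0)
      - ∑ k : Fin (m + 1), LinearMap.proj k.succ.succ, ?_⟩
    rintro (j | k) h
    · have hij : ((j : ℕ) : ℝ) - ((i : ℕ) : ℝ) ≠ 0 := by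
        rw [sub_ne_zero]
        intro h'
        apply h
        congr 1
        exact Fin.ext (by exact_mod_cast h')
      have := pow_pos (abs_pos.2 hij) 2
      rw [sq_abs] at this
      simp [pyrPt, LinearMap.sum_apply, -Fin.succ_zero_eq_one, -Fin.succ_zero_eq_one']
      nlinarith
    · simp [pyrPt, LinearMap.sum_apply, -Fin.succ_zero_eq_one, -Fin.succ_zero_eq_one']
      nlinarith [sq_nonneg ((i : ℕ) : ℝ)]
  · refine ⟨LinearMap.proj k.succ.succ, ?_⟩
    rintro (j | l) h
    · simp [pyrPt]
    · have : k ≠ l := fun h' => h (by rw [h'])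
      simp [pyrPt, Pi.single_apply, this]

theorem pyrPt_injective (n m : ℕ) : Function.Injective (pyrPt n m) := by
  intro t s h
  by_contra hne
  obtain ⟨f, hf⟩ := pyrPt_sep n m s
  exact absurd (hf t hne) (by rw [h]; exact lt_irrefl _)

theorem pyrPt_lattice (n m : ℕ) (s : Fin n ⊕ Fin (m + 1)) : pyrPt n m s ∈ latticePoints (m + 3) := by
  intro c
  rcases s with i | k
  · refine Fin.cases ?_ (fun c => Fin.cases ?_ (fun c => ?_) c) c
    · exact ⟨i, by simp [pyrPt]⟩
    · exact ⟨(i : ℤ) ^ 2, by simp [pyrPt]⟩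
    · exact ⟨0, by simp [pyrPt]⟩
  · refine Fin.cases ?_ (fun c => Fin.cases ?_ (fun c => ?_) c) c
    · exact ⟨0, by simp [pyrPt]⟩
    · exact ⟨0, by simp [pyrPt]⟩
    · exact ⟨if c = k then 1 else 0, by simp [pyrPt, Pi.single_apply]⟩

theorem pyrPt_slab (n m : ℕ) (s : Fin n ⊕ Fin (m + 1)) :
    pyrPt n m s (Fin.succ (Fin.succ 0)) ∈ Set.Icc (0 : ℝ) 1 := by
  rcases s with i | k
  · simp only [pyrPt, Fin.cons_succ]; simp
  · simp only [pyrPt, Fin.cons_succ, Pi.single_apply]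
    split_ifs <;> simp

/-- For every `d ≥ 3` and `n ≥ 3` there is a set `S ⊆ ℤ^d` of exactly
`n + d - 2` points, all of which are extreme points of `conv S`, such that the interior of
`conv S` contains no lattice point.  In particular, hollow lattice polytopes in `ℤ^d` can have
arbitrarily many vertices. -/
theorem exists_hollow_polytope_many_vertices (d n : ℕ) (hd : 3 ≤ d) (hn : 3 ≤ n) :
    ∃ S : Finset (Fin d → ℝ),
      (S : Set (Fin d → ℝ)) ⊆ latticePoints d ∧
      S.card = n + d - 2 ∧
      (∀ x ∈ S, x ∈ Set.extremePoints ℝ (convexHull ℝ (S : Set (Fin d → ℝ)))) ∧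
      interior (convexHull ℝ (S : Set (Fin d → ℝ))) ∩ latticePoints d = ∅ := by
  obtain ⟨m, rfl⟩ : ∃ m, d = m + 3 := ⟨d - 3, by omega⟩
  refine ⟨Finset.univ.map ⟨pyrPt n m, pyrPt_injective n m⟩, ?_, ?_, ?_, ?_⟩
  · intro x hx
    simp only [Finset.coe_map, Function.Embedding.coeFn_mk, Finset.coe_univ, Set.image_univ] at hx
    obtain ⟨s, rfl⟩ := hx
    exact pyrPt_lattice n m s
  · simp; omega
  · intro x hx
    obtain ⟨s, -, rfl⟩ := Finset.mem_map.1 hx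
    obtain ⟨f, hf⟩ := pyrPt_sep n m s
    refine extreme_of_strict_max _ _ (Finset.mem_coe.2 hx) f ?_
    intro y hy hne
    obtain ⟨t, -, rfl⟩ := Finset.mem_map.1 (Finset.mem_coe.1 hy)
    exact hf t (fun h => hne (by rw [h]))
  · rw [Set.eq_empty_iff_forall_notMem]
    rintro p ⟨hp, hl⟩
    let c : Fin (m + 3) := Fin.succ (Fin.succ 0)
    have hsub : convexHull ℝ ((Finset.univ.map ⟨pyrPt n m, pyrPt_injective n m⟩ :
        Finset (Fin (m + 3) → ℝ)) : Set (Fin (m + 3) → ℝ)) ⊆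
        (Function.eval c) ⁻¹' (Set.Icc (0 : ℝ) 1) := by
      refine convexHull_min ?_
        ((convex_Icc (0 : ℝ) 1).linear_preimage (LinearMap.proj c : (Fin (m + 3) → ℝ) →ₗ[ℝ] ℝ))
      intro y hy
      obtain ⟨t, -, rfl⟩ := Finset.mem_map.1 (Finset.mem_coe.1 hy)
      exact pyrPt_slab n m t
    have h2 := interior_mono hsub hp
    rw [← (isOpenMap_eval c).preimage_interior_eq_interior_preimage (continuous_apply c),
      interior_Icc] at h2
    obtain ⟨z, hz⟩ := hl c
    have h3 : p c ∈ Set.Ioo (0 : ℝ) 1 := h2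
    rw [hz] at h3
    have h4 : 0 < z := by exact_mod_cast h3.1
    have h5 : z < 1 := by exact_mod_cast h3.2
    omega
end

section
/- Let k ≥ 1 and let C be a convex subset of R^d. If C contains no lattice segment of length k (i.e., C contains no set of the form {x, x+y, x+2y, ..., x+ky} with x, y ∈ Z^d and y ≠ 0), then |C ∩ Z^d| ≤ k^d. -/
/-- A set `C ⊆ ℝ^d` contains a lattice segment of length `k` if it contains a set of the form
`{x, x + y, x + 2y, …, x + ky}` with `x, y ∈ ℤ^d` and `y ≠ 0`. -/
def ContainsLatticeSegment (d k : ℕ) (C : Set (Fin d → ℝ)) : Prop :=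
  ∃ x y : Fin d → ℤ, y ≠ 0 ∧
    ∀ i : ℕ, i ≤ k → ((fun j => (x j : ℝ)) + (i : ℝ) • (fun j => (y j : ℝ))) ∈ C

/-- A convex set in `ℝ^d` containing no lattice segment of length `k ≥ 1`
contains at most `k ^ d` lattice points. -/
theorem convex_no_segment_card_lattice_le (d k : ℕ) (hk : 1 ≤ k)
    (C : Set (Fin d → ℝ)) (hC : Convex ℝ C)
    (hseg : ¬ContainsLatticeSegment d k C) :
    (C ∩ latticePoints d).Finite ∧ (C ∩ latticePoints d).ncard ≤ k ^ d := by
  haveI : NeZero k := ⟨by omega⟩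
  have hk0 : (0 : ℝ) < k := by exact_mod_cast hk
  let f : (Fin d → ℝ) → (Fin d → ZMod k) := fun x j => ((⌊x j⌋ : ℤ) : ZMod k)
  have hinj : Set.InjOn f (C ∩ latticePoints d) := by
    rintro a ⟨haC, haL⟩ b ⟨hbC, hbL⟩ hab
    choose m hm using haL
    choose n hn using hbL
    have hdvd : ∀ j, (k : ℤ) ∣ n j - m j := by
      intro j
      have h := congrFun hab j
      simp only [f, hm, hn, Int.floor_intCast] at h
      exact (ZMod.intCast_eq_intCast_iff_dvd_sub _ _ _).1 h
    choose y hy using hdvd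
    have hyR : ∀ j, b j - a j = k * (y j : ℝ) := by
      intro j
      rw [hm, hn]
      exact_mod_cast hy j
    by_contra hne
    apply hseg
    refine ⟨m, y, ?_, ?_⟩
    · rintro rfl
      apply hne
      funext j
      have := hyR j
      simp only [Pi.zero_apply, Int.cast_zero, mul_zero] at this
      linarith
    · intro i hi
      have hi' : (i : ℝ) ≤ k := by exact_mod_cast hi
      have h1 : (i : ℝ) / k ≤ 1 := by rw [div_le_one hk0]; exact hi'
      have hmem := hC.add_smul_sub_mem haC hbC (t := (i : ℝ) / k) ⟨by positivity, h1⟩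
      convert hmem using 1
      funext j
      simp only [Pi.add_apply, Pi.smul_apply, Pi.sub_apply, smul_eq_mul]
      rw [hyR j, hm j]
      field_simp
  have hmaps : Set.MapsTo f (C ∩ latticePoints d) Set.univ := fun _ _ => Set.mem_univ _
  refine ⟨Set.Finite.of_injOn hmaps hinj Set.finite_univ, ?_⟩
  have h := Set.ncard_le_ncard_of_injOn f hmaps hinj Set.finite_univ
  rw [Set.ncard_univ, Nat.card_eq_fintype_card] at h
  simpa [ZMod.card] using h
end

section
/- For every dimension d ≥ 1 there is a constant c(d) > 0 such that for all integers k ≥ 1: if P is a convex lattice polytope in R^d (the convex hull of a finite subset of Z^d) that contains no lattice segment of length k, then P has at most c(d) · k^{d-1} vertices. -/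
open Matrix in
theorem card_quot_mulVec {d : ℕ} (M : Matrix (Fin d) (Fin d) ℤ) (hM : M.det ≠ 0) :
    Nat.card ((Fin d → ℤ) ⧸ (LinearMap.range M.mulVecLin)) = M.det.natAbs := by
  have hinj : Function.Injective M.mulVecLin := by
    rw [← LinearMap.ker_eq_bot, LinearMap.ker_eq_bot']
    intro v hv
    exact Matrix.eq_zero_of_mulVec_eq_zero hM (by simpa using hv)
  have h := Submodule.natAbs_det_equiv (LinearMap.range M.mulVecLin)
    (LinearEquiv.ofInjective M.mulVecLin hinj)
  rw [← h, ← LinearMap.det_toLin']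
  congr 2

/-- many lattice points in the parallelepiped give a short vector -/
theorem short_vector {d : ℕ} (M : Matrix (Fin d) (Fin d) ℤ) (hM : M.det ≠ 0) (q : ℕ) (hq : 0 < q)
    (hlt : q ^ d < M.det.natAbs) :
    ∃ y : Fin d → ℤ, y ≠ 0 ∧ ∃ t : Fin d → ℝ, (∀ i, |t i| * q ≤ 1) ∧
      ∀ j, (y j : ℝ) = ∑ i, t i * (M i j : ℝ) := by
  classical
  have hMt : M.transpose.det ≠ 0 := by rwa [Matrix.det_transpose]
  have hcard := card_quot_mulVec M.transpose hMt
  rw [Matrix.det_transpose] at hcard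
  set N := LinearMap.range M.transpose.mulVecLin with hN
  have hfin : Finite ((Fin d → ℤ) ⧸ N) := by
    apply Nat.finite_of_card_ne_zero
    rw [hcard]; omega
  have := Fintype.ofFinite ((Fin d → ℤ) ⧸ N)
  rw [Nat.card_eq_fintype_card] at hcard
  have hDR : (M.det : ℝ) ≠ 0 := by exact_mod_cast hM
  let T : (Fin d → ℤ) → Fin d → ℝ := fun y i => (Matrix.cramer M.transpose y i : ℝ) / M.det
  have hT : ∀ y j, (y j : ℝ) = ∑ i, T y i * (M i j : ℝ) := by
    intro y j
    have h := congrFun (Matrix.mulVec_cramer M.transpose y) j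
    rw [Matrix.det_transpose] at h
    simp only [Matrix.mulVec, dotProduct, Matrix.transpose_apply, Pi.smul_apply, smul_eq_mul] at h
    have h2 : (∑ i, (M i j : ℝ) * (Matrix.cramer M.transpose y i : ℝ)) = M.det * y j := by
      exact_mod_cast h
    have : (y j : ℝ) = (∑ i, (M i j : ℝ) * (Matrix.cramer M.transpose y i : ℝ)) / M.det := by
      rw [h2]; field_simp
    rw [this, Finset.sum_div]
    refine Finset.sum_congr rfl fun i _ => ?_
    simp only [T]; ring
  have hq' : (0 : ℝ) < q := by exact_mod_cast hq
  let F : ((Fin d → ℤ) ⧸ N) → Fin d → Fin q := fun g i =>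
    ⟨⌊(q : ℝ) * Int.fract (T g.out i)⌋₊, by
      rw [Nat.floor_lt (by positivity)]
      nlinarith [Int.fract_lt_one (T g.out i)]⟩
  obtain ⟨g, g', hne, hF⟩ := Fintype.exists_ne_map_eq_of_card_lt F (by simpa [hcard] using hlt)
  let y := g.out
  let y' := g'.out
  let z : Fin d → ℤ := fun i => ⌊T y i⌋ - ⌊T y' i⌋
  refine ⟨y - y' - M.transpose.mulVecLin z, ?_, fun i => Int.fract (T y i) - Int.fract (T y' i), ?_, ?_⟩
  · intro h0
    apply hne
    have : y - y' ∈ N := by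
      rw [sub_eq_zero.1 h0]; exact ⟨z, rfl⟩
    rw [← Submodule.Quotient.eq] at this
    have e1 : Submodule.Quotient.mk y = g := Quotient.out_eq g
    have e2 : Submodule.Quotient.mk y' = g' := Quotient.out_eq g'
    rw [← e1, ← e2]; exact this
  · intro i
    have h := congrArg Fin.val (congrFun hF i)
    simp only [F] at h
    have a1 := Nat.floor_le (a := (q : ℝ) * Int.fract (T y i)) (by positivity)
    have a2 := Nat.lt_floor_add_one ((q : ℝ) * Int.fract (T y i))
    have b1 := Nat.floor_le (a := (q : ℝ) * Int.fract (T y' i)) (by positivity)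
    have b2 := Nat.lt_floor_add_one ((q : ℝ) * Int.fract (T y' i))
    have h' : (⌊(q : ℝ) * Int.fract (T y i)⌋₊ : ℝ) = ⌊(q : ℝ) * Int.fract (T y' i)⌋₊ := by
      exact_mod_cast h
    have h6 : |Int.fract (T y i) - Int.fract (T y' i)| * q =
        |(Int.fract (T y i) - Int.fract (T y' i)) * q| := by
      rw [abs_mul, abs_of_pos hq']
    change |Int.fract (T y i) - Int.fract (T y' i)| * q ≤ 1
    rw [h6, abs_le]
    constructor <;> nlinarith
  · intro j
    simp only [Pi.sub_apply, Matrix.mulVecLin_apply, Matrix.mulVec, dotProduct,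
      Matrix.transpose_apply]
    push_cast
    rw [hT y j, hT y' j, ← Finset.sum_sub_distrib, ← Finset.sum_sub_distrib]
    refine Finset.sum_congr rfl fun i _ => ?_
    simp only [Int.fract, z]
    push_cast
    ring

/-- pigeonhole version of Minkowski's theorem on linear forms -/
theorem small_forms {d : ℕ} (M : Matrix (Fin d) (Fin d) ℤ) (hM : M.det ≠ 0) (q : ℕ)
    (hlt : M.det.natAbs < (q + 1) ^ d) :
    ∃ g : Fin d → ℤ, g ≠ 0 ∧ ∀ i, |M i ⬝ᵥ g| ≤ q := by
  classical
  have hcard := card_quot_mulVec M hM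
  set N := LinearMap.range M.mulVecLin with hN
  have hfin : Finite ((Fin d → ℤ) ⧸ N) := by
    apply Nat.finite_of_card_ne_zero
    rw [hcard]; simpa using hM
  have := Fintype.ofFinite ((Fin d → ℤ) ⧸ N)
  rw [Nat.card_eq_fintype_card] at hcard
  let F : (Fin d → Fin (q + 1)) → ((Fin d → ℤ) ⧸ N) := fun s =>
    Submodule.Quotient.mk (fun i => ((s i : ℕ) : ℤ))
  obtain ⟨s, s', hne, hF⟩ := Fintype.exists_ne_map_eq_of_card_lt F (by simpa [hcard] using hlt)
  simp only [F] at hF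
  rw [Submodule.Quotient.eq] at hF
  obtain ⟨g, hg⟩ := hF
  have hg' : ∀ i, M i ⬝ᵥ g = ((s i : ℕ) : ℤ) - ((s' i : ℕ) : ℤ) := fun i => congrFun hg i
  refine ⟨g, ?_, fun i => ?_⟩
  · rintro rfl
    apply hne
    ext i
    have := hg' i
    simp at this
    omega
  · rw [hg', abs_le]
    have := (s i).2
    have := (s' i).2
    omega

/-- a set of integer vectors either lies in a hyperplane or has a nonsingular tuple -/
theorem degenerate_or {d : ℕ} (C : Finset (Fin d → ℤ)) :
    (∃ g : Fin d → ℤ, g ≠ 0 ∧ ∀ c ∈ C, c ⬝ᵥ g = 0) ∨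
    ∃ M : Matrix (Fin d) (Fin d) ℤ, (∀ i, M i ∈ C) ∧ M.det ≠ 0 := by
  classical
  let ι : (Fin d → ℤ) → (Fin d → ℚ) := fun c i => (c i : ℚ)
  by_cases htop : Submodule.span ℚ (ι '' (C : Set (Fin d → ℤ))) = ⊤
  · right
    obtain ⟨f, hf, -, hli⟩ := Submodule.exists_fun_fin_finrank_span_eq ℚ (ι '' (C : Set (Fin d → ℤ)))
    have hr : Module.finrank ℚ (Submodule.span ℚ (ι '' (C : Set (Fin d → ℤ)))) = d := by
      rw [htop]; simp
    have hli' := hli.comp (Fin.cast hr.symm) (Fin.cast_injective _)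
    choose m hm hmf using hf
    refine ⟨fun i => m (Fin.cast hr.symm i), fun i => hm _, ?_⟩
    intro h0
    have hu : IsUnit (Matrix.of (f ∘ Fin.cast hr.symm)) :=
      Matrix.linearIndependent_rows_iff_isUnit.1 hli'
    rw [Matrix.isUnit_iff_isUnit_det, isUnit_iff_ne_zero] at hu
    apply hu
    have : (Matrix.of (f ∘ Fin.cast hr.symm)) =
        (Matrix.of fun i => m (Fin.cast hr.symm i)).map (Int.castRingHom ℚ) := by
      ext i j
      simp only [Matrix.of_apply, Function.comp, Matrix.map_apply]
      rw [← hmf]; rfl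
    rw [this, ← RingHom.mapMatrix_apply, ← RingHom.map_det]
    have h0' : (Matrix.of fun i => m (Fin.cast hr.symm i)).det = 0 := h0
    rw [h0']; simp
  · left
    obtain ⟨φ, hφ, hker⟩ := Submodule.exists_le_ker_of_lt_top _ (lt_top_iff_ne_top.2 htop)
    obtain ⟨b, hb⟩ := IsLocalization.exist_integer_multiples_of_finite (nonZeroDivisors ℤ)
      (fun i => φ (Pi.single i 1))
    choose g hg using hb
    have hb0 : ((b : ℤ) : ℚ) ≠ 0 := by
      have := nonZeroDivisors.ne_zero b.2
      exact_mod_cast this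
    have hg' : ∀ i, (g i : ℚ) = (b : ℤ) * φ (Pi.single i 1) := fun i => by
      have := hg i
      simpa using this
    refine ⟨g, ?_, fun c hc => ?_⟩
    · rintro rfl
      apply hφ
      apply LinearMap.pi_ext'
      intro i
      ext
      have := hg' i
      simp [hb0] at this
      simpa using this
    · have h1 : φ (ι c) = 0 := hker (Submodule.subset_span ⟨c, hc, rfl⟩)
      rw [LinearMap.pi_apply_eq_sum_univ φ] at h1
      have h2 : ∑ i, (c i : ℚ) * g i = 0 := by
        calc ∑ i, (c i : ℚ) * g i = (b : ℤ) * ∑ i, (c i : ℚ) * φ (Pi.single i 1) := by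
              rw [Finset.mul_sum]
              refine Finset.sum_congr rfl fun i _ => ?_
              rw [hg']; ring
          _ = 0 := by
              rw [mul_eq_zero]; right
              convert h1 using 2 with i
              simp only [ι, smul_eq_mul]
              congr 2
              ext j
              simp [Pi.single_apply, eq_comm]
      simp only [dotProduct]
      exact_mod_cast h2

theorem core_s11 {d : ℕ} (C : Finset (Fin d → ℤ)) (q : ℕ) (hq : 0 < q) (hd : 0 < d) :
    (∃ g : Fin d → ℤ, g ≠ 0 ∧ ∀ c ∈ C, |c ⬝ᵥ g| ≤ d * q) ∨
    ∃ y : Fin d → ℤ, y ≠ 0 ∧ ∃ v : Fin d → Fin d → ℤ, (∀ i, v i ∈ C) ∧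
      ∃ t : Fin d → ℝ, (∀ i, |t i| * q ≤ 1) ∧ ∀ j, (y j : ℝ) = ∑ i, t i * (v i j : ℝ) := by
  classical
  rcases degenerate_or C with ⟨g, hg, h⟩ | ⟨M₀, hM₀C, hM₀⟩
  · left
    refine ⟨g, hg, fun c hc => ?_⟩
    rw [h c hc]; simp; positivity
  · obtain ⟨M, hMC, hmax⟩ := Finset.exists_max_image (Fintype.piFinset fun _ : Fin d => C)
      (fun M => (Matrix.det (Matrix.of M)).natAbs) ⟨M₀, Fintype.mem_piFinset.2 hM₀C⟩
    have hMC' : ∀ i, M i ∈ C := by simpa using hMC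
    have hM : (Matrix.of M).det ≠ 0 := by
      intro h0
      have := hmax M₀ (Fintype.mem_piFinset.2 hM₀C)
      rw [h0] at this
      simp at this
      exact hM₀ this
    by_cases hlt : q ^ d < (Matrix.of M).det.natAbs
    · right
      obtain ⟨y, hy, t, ht, h⟩ := short_vector (Matrix.of M) hM q hq hlt
      exact ⟨y, hy, M, hMC', t, ht, h⟩
    · left
      obtain ⟨g, hg, h⟩ := small_forms (Matrix.of M) hM q
        (lt_of_le_of_lt (not_lt.1 hlt) (Nat.pow_lt_pow_left (Nat.lt_succ_self q) hd.ne'))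
      refine ⟨g, hg, fun c hc => ?_⟩
      have hcr := Matrix.mulVec_cramer (Matrix.of M).transpose c
      rw [Matrix.det_transpose] at hcr
      have hu : ∀ i, |Matrix.cramer (Matrix.of M).transpose c i| ≤ |(Matrix.of M).det| := by
        intro i
        rw [Matrix.cramer_transpose_apply]
        have := hmax (Function.update M i c) (by
          simp only [Fintype.mem_piFinset]
          intro j
          by_cases hj : j = i
          · subst hj; simpa using hc
          · simpa [Function.update_of_ne hj] using hMC' j)
        have h3 : (Matrix.of M).updateRow i c = Matrix.of (Function.update M i c) := rfl
        rw [h3]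
        simp only [Int.abs_eq_natAbs]
        exact_mod_cast this
      have h4 : (Matrix.of M).det * (c ⬝ᵥ g) =
          ∑ i, Matrix.cramer (Matrix.of M).transpose c i * (M i ⬝ᵥ g) := by
        rw [← smul_eq_mul, ← smul_dotProduct, ← hcr]
        simp only [Matrix.mulVec, dotProduct, Matrix.transpose_apply, Matrix.of_apply,
          Finset.sum_mul, Finset.mul_sum]
        rw [Finset.sum_comm]
        refine Finset.sum_congr rfl fun i _ => Finset.sum_congr rfl fun j _ => ?_
        ring
      have h5 : |(Matrix.of M).det| * |c ⬝ᵥ g| ≤ |(Matrix.of M).det| * (d * q) := by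
        rw [← abs_mul, h4]
        calc _ ≤ ∑ i, |Matrix.cramer (Matrix.of M).transpose c i * (M i ⬝ᵥ g)| :=
              Finset.abs_sum_le_sum_abs _ _
          _ ≤ ∑ i : Fin d, |(Matrix.of M).det| * q := by
              refine Finset.sum_le_sum fun i _ => ?_
              rw [abs_mul]
              exact mul_le_mul (hu i) (h i) (abs_nonneg _) (abs_nonneg _)
          _ = _ := by simp; ring
      exact le_of_mul_le_mul_left h5 (abs_pos.2 hM)

/-- the inclusion of the integer lattice in real space -/
def latEmb {n : ℕ} (x : Fin n → ℤ) : Fin n → ℝ := fun j => (x j : ℝ)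

/-- convexly independent finite lattice sets whose hull has no lattice segment of length `k` -/
def GoodSet {n : ℕ} (k : ℕ) (A : Finset (Fin n → ℤ)) : Prop :=
  (∀ a ∈ A, latEmb a ∉ convexHull ℝ (latEmb '' ((A : Set (Fin n → ℤ)) \ {a}))) ∧
  ∀ x y : Fin n → ℤ, y ≠ 0 → latEmb x ∈ convexHull ℝ (latEmb '' (A : Set (Fin n → ℤ))) →
    latEmb (x + (k : ℤ) • y) ∉ convexHull ℝ (latEmb '' (A : Set (Fin n → ℤ)))

theorem GoodSet.mono {n k : ℕ} {A B : Finset (Fin n → ℤ)} (hA : GoodSet k A) (hBA : B ⊆ A) :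
    GoodSet k B := by
  have hs : (B : Set (Fin n → ℤ)) ⊆ A := by exact_mod_cast hBA
  refine ⟨fun a ha h => hA.1 a (hBA ha) ?_, fun x y hy hx hxy => hA.2 x y hy ?_ ?_⟩
  · exact convexHull_mono (Set.image_mono (Set.sdiff_subset_sdiff_left hs)) h
  · exact convexHull_mono (Set.image_mono hs) hx
  · exact convexHull_mono (Set.image_mono hs) hxy

theorem finrank_ker_map_lt {n : ℕ} (L : Submodule ℤ (Fin n → ℤ)) (g : L →ₗ[ℤ] ℤ) (hg : g ≠ 0) :
    Module.finrank ℤ ((LinearMap.ker g).map L.subtype) < Module.finrank ℤ L := by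
  have h1 := Submodule.finrank_quotient_add_finrank (LinearMap.ker g)
  have h2 := (LinearMap.quotKerEquivRange g).finrank_eq
  have h3 : Module.finrank ℤ ((LinearMap.ker g).map L.subtype) =
      Module.finrank ℤ (LinearMap.ker g) :=
    (Submodule.equivMapOfInjective L.subtype L.injective_subtype (LinearMap.ker g)).finrank_eq.symm
  have h4 : 0 < Module.finrank ℤ (LinearMap.range g) := by
    rw [Module.finrank_pos_iff, Submodule.nontrivial_iff_ne_bot]
    intro h
    exact hg (LinearMap.range_eq_bot.1 h)
  omega

theorem base_case {n k : ℕ} (A : Finset (Fin n → ℤ)) (hA : GoodSet k A)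
    (L : Submodule ℤ (Fin n → ℤ)) (hL : Module.finrank ℤ L ≤ 1)
    (hAL : ∀ a ∈ A, ∀ b ∈ A, a - b ∈ L) : A.card ≤ 2 := by
  classical
  obtain ⟨v, hv⟩ := finrank_le_one_iff.1 hL
  rcases A.eq_empty_or_nonempty with rfl | ⟨a0, ha0⟩
  · simp
  have : ∀ a, ∃ m : ℤ, a ∈ A → a - a0 = m • (v : Fin n → ℤ) := by
    intro a
    by_cases ha : a ∈ A
    · obtain ⟨m, hm⟩ := hv ⟨a - a0, hAL a ha a0 ha0⟩
      refine ⟨m, fun _ => ?_⟩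
      have := congrArg Subtype.val hm
      simpa using this.symm
    · exact ⟨0, fun h => absurd h ha⟩
  choose m hm using this
  obtain ⟨p, hp, hpmin⟩ := Finset.exists_min_image A m ⟨a0, ha0⟩
  obtain ⟨r, hr, hrmax⟩ := Finset.exists_max_image A m ⟨a0, ha0⟩
  have hsub : A ⊆ {p, r} := by
    intro c hc
    by_contra hcn
    simp only [Finset.mem_insert, Finset.mem_singleton, not_or] at hcn
    have e : ∀ a ∈ A, ∀ j, (a j : ℝ) = a0 j + m a * (v : Fin n → ℤ) j := by
      intro a ha j
      have := congrFun (hm a ha) j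
      simp at this
      have h2 : a j = a0 j + m a * (v : Fin n → ℤ) j := by linarith
      rw [h2]; push_cast; ring
    have inj : ∀ a ∈ A, ∀ b ∈ A, m a = m b → a = b := by
      intro a ha b hb h
      have h1 := hm a ha
      rw [h, ← hm b hb] at h1
      simpa using h1
    have h1 : m p < m c := lt_of_le_of_ne (hpmin c hc) fun h => hcn.1 (inj _ hc _ hp h.symm)
    have h2 : m c < m r := lt_of_le_of_ne (hrmax c hc) fun h => hcn.2 (inj _ hc _ hr h)
    have h1' : (m p : ℝ) < m c := by exact_mod_cast h1
    have h2' : (m c : ℝ) < m r := by exact_mod_cast h2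
    have hD : (0 : ℝ) < m r - m p := by linarith
    apply hA.1 c hc
    have hp' : latEmb p ∈ convexHull ℝ (latEmb '' ((A : Set (Fin n → ℤ)) \ {c})) :=
      subset_convexHull _ _ ⟨p, ⟨hp, fun h => hcn.1 h.symm⟩, rfl⟩
    have hr' : latEmb r ∈ convexHull ℝ (latEmb '' ((A : Set (Fin n → ℤ)) \ {c})) :=
      subset_convexHull _ _ ⟨r, ⟨hr, fun h => hcn.2 h.symm⟩, rfl⟩
    have key := (convex_convexHull ℝ (latEmb '' ((A : Set (Fin n → ℤ)) \ {c}))) hp' hr'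
      (a := (m r - m c) / (m r - m p)) (b := (m c - m p) / (m r - m p))
      (div_nonneg (by linarith) hD.le) (div_nonneg (by linarith) hD.le) (by field_simp; ring)
    convert key using 1
    ext j
    simp only [latEmb, Pi.add_apply, Pi.smul_apply, smul_eq_mul]
    rw [e c hc, e p hp, e r hr]
    field_simp
    ring
  exact (Finset.card_le_card hsub).trans Finset.card_le_two

theorem deep_mem {n e : ℕ} (S : Set (Fin n → ℝ)) (a0 : Fin n → ℤ) (a : Fin e → Fin n → ℤ)
    (h0 : latEmb a0 ∈ S) (ha : ∀ i, latEmb (a i) ∈ S) (s : Fin e → ℝ)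
    (hs : ∀ i, |s i| * ((e : ℝ) + 1) ^ 2 ≤ 1) (z : Fin n → ℝ)
    (hz : ∀ l, z l = ((a0 l : ℝ) + ∑ i, (a i l : ℝ)) / (e + 1) +
      ∑ i, s i * ((a i l : ℝ) - a0 l)) : z ∈ convexHull ℝ S := by
  have he : (0 : ℝ) < (e : ℝ) + 1 := by positivity
  have hs' : ∀ i, |s i| ≤ 1 / ((e : ℝ) + 1) ^ 2 := fun i => by
    rw [le_div_iff₀ (by positivity)]; exact hs i
  have hsum : |∑ i, s i| ≤ 1 / ((e : ℝ) + 1) := by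
    calc |∑ i, s i| ≤ ∑ i, |s i| := Finset.abs_sum_le_sum_abs _ _
      _ ≤ ∑ i : Fin e, 1 / ((e : ℝ) + 1) ^ 2 := Finset.sum_le_sum fun i _ => hs' i
      _ = e / ((e : ℝ) + 1) ^ 2 := by simp; ring
      _ ≤ 1 / ((e : ℝ) + 1) := by
        rw [div_le_div_iff₀ (by positivity) (by positivity)]; nlinarith
  have hle : 1 / ((e : ℝ) + 1) ^ 2 ≤ 1 / ((e : ℝ) + 1) := by
    rw [div_le_div_iff₀ (by positivity) (by positivity)]; nlinarith
  let w : Fin (e + 1) → ℝ := Fin.cons (1 / ((e : ℝ) + 1) - ∑ i, s i) fun i => 1 / ((e : ℝ) + 1) + s i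
  let p : Fin (e + 1) → Fin n → ℝ := Fin.cons (latEmb a0) fun i => latEmb (a i)
  have key := (convex_convexHull ℝ S).sum_mem (t := Finset.univ) (w := w) (z := p) ?_ ?_ ?_
  · convert key using 1
    ext l
    rw [hz, Fin.sum_univ_succ]
    simp only [w, p, Fin.cons_zero, Fin.cons_succ, Pi.add_apply, Pi.smul_apply, smul_eq_mul,
      Finset.sum_apply, latEmb, add_mul, sub_mul, mul_sub, Finset.sum_add_distrib,
      Finset.sum_sub_distrib, ← Finset.mul_sum, ← Finset.sum_mul]
    ring
  · intro i _
    refine Fin.cases ?_ (fun i => ?_) i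
    · simp only [w, Fin.cons_zero]
      linarith [le_abs_self (∑ i, s i)]
    · simp only [w, Fin.cons_succ]
      linarith [neg_abs_le (s i), hs' i]
  · rw [Fin.sum_univ_succ]
    simp only [w, Fin.cons_zero, Fin.cons_succ, Finset.sum_add_distrib, Finset.sum_const,
      Finset.card_univ, Fintype.card_fin, nsmul_eq_mul]
    field_simp
    ring
  · intro i _
    refine Fin.cases ?_ (fun i => ?_) i
    · exact subset_convexHull _ _ h0
    · exact subset_convexHull _ _ (ha i)

theorem class_form {n k e : ℕ} (hk : 1 ≤ k) (he : 0 < e) (A : Finset (Fin n → ℤ))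
    (hA : GoodSet k A) (L : Submodule ℤ (Fin n → ℤ)) (hL : Module.finrank ℤ L = e)
    (hAL : ∀ a ∈ A, ∀ b ∈ A, a - b ∈ L)
    (hmod : ∀ a ∈ A, ∀ b ∈ A, ∀ l, ((e + 1 : ℕ) : ℤ) ∣ a l - b l) (a0 : Fin n → ℤ) (ha0 : a0 ∈ A) :
    ∃ g : L →ₗ[ℤ] ℤ, g ≠ 0 ∧ ∀ a (ha : a ∈ A),
      |g ⟨a - a0, hAL a ha a0 ha0⟩| ≤ e * (k * (e + 1) ^ 2 : ℕ) := by
  classical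
  let b := Module.finBasisOfFinrankEq ℤ L hL
  let C : Finset (Fin e → ℤ) := A.attach.image fun a => b.equivFun ⟨a.1 - a0, hAL a.1 a.2 a0 ha0⟩
  have hC : ∀ a (ha : a ∈ A), b.equivFun ⟨a - a0, hAL a ha a0 ha0⟩ ∈ C := fun a ha =>
    Finset.mem_image.2 ⟨⟨a, ha⟩, Finset.mem_attach _ _, rfl⟩
  rcases core_s11 C (k * (e + 1) ^ 2) (by positivity) he with ⟨g, hg, h⟩ | ⟨y, hy, v, hv, t, ht, hyt⟩
  · let G : L →ₗ[ℤ] ℤ := 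
      { toFun := fun x => b.equivFun x ⬝ᵥ g
        map_add' := fun x z => by rw [map_add, add_dotProduct]
        map_smul' := fun r x => by rw [map_smul, smul_dotProduct]; rfl }
    have hG : ∀ x, G x = b.equivFun x ⬝ᵥ g := fun x => rfl
    refine ⟨G, ?_, fun a ha => ?_⟩
    · intro h0
      apply hg
      ext i
      have := hG (b i)
      simp only [h0, dotProduct, Module.Basis.equivFun_self] at this
      simpa [ite_mul] using this.symm
    · rw [hG]; exact h _ (hC a ha)
  · exfalso
    have hv' : ∀ i, ∃ a, ∃ ha : a ∈ A, b.equivFun ⟨a - a0, hAL a ha a0 ha0⟩ = v i := by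
      intro i
      obtain ⟨a, -, h⟩ := Finset.mem_image.1 (hv i)
      exact ⟨a.1, a.2, h⟩
    choose a ha hav using hv'
    let Y : L := b.equivFun.symm y
    have hY0 : (Y : Fin n → ℤ) ≠ 0 := by
      intro h
      apply hy
      have : Y = 0 := Subtype.ext h
      exact b.equivFun.symm.map_eq_zero_iff.1 this
    have hcoord : ∀ x : L, ∀ l, ((x : Fin n → ℤ) l : ℝ) =
        ∑ j, (b.equivFun x j : ℝ) * ((b j : Fin n → ℤ) l : ℝ) := by
      intro x l
      have h := congrArg (fun z : L => (z : Fin n → ℤ) l) (b.sum_equivFun x)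
      simp only [Submodule.coe_sum, Submodule.coe_smul, Finset.sum_apply, Pi.smul_apply,
        smul_eq_mul] at h
      rw [← h]; push_cast; rfl
    have hYl : ∀ l, ((Y : Fin n → ℤ) l : ℝ) = ∑ i, t i * ((a i l : ℝ) - a0 l) := by
      intro l
      have h1 : ∀ i, ((a i l : ℝ) - a0 l) = ∑ j, (v i j : ℝ) * ((b j : Fin n → ℤ) l : ℝ) := by
        intro i
        have := hcoord ⟨a i - a0, hAL _ (ha i) a0 ha0⟩ l
        rw [hav i] at this
        rw [← this]; simp
      rw [hcoord]
      simp only [h1, Y, LinearEquiv.apply_symm_apply, hyt, Finset.sum_mul, Finset.mul_sum]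
      rw [Finset.sum_comm]
      refine Finset.sum_congr rfl fun i _ => Finset.sum_congr rfl fun j _ => ?_
      ring
    have hx : ∀ l, ∃ m : ℤ, a0 l + ∑ i, a i l = ((e + 1 : ℕ) : ℤ) * m := by
      intro l
      have h1 : ((e + 1 : ℕ) : ℤ) ∣ ∑ i, (a i l - a0 l) :=
        Finset.dvd_sum fun i _ => hmod _ (ha i) _ ha0 l
      obtain ⟨m, hm⟩ := h1
      refine ⟨m + a0 l, ?_⟩
      rw [mul_add, ← hm, Finset.sum_sub_distrib]
      simp; ring
    choose x hx using hx
    have he1 : (0 : ℝ) < (e : ℝ) + 1 := by positivity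
    have hxr : ∀ l, (x l : ℝ) = ((a0 l : ℝ) + ∑ i, (a i l : ℝ)) / (e + 1) := by
      intro l
      rw [eq_div_iff he1.ne']
      have : ((a0 l + ∑ i, a i l : ℤ) : ℝ) = (((e + 1 : ℕ) : ℤ) * x l : ℤ) := by rw [hx]
      push_cast at this
      rw [this]; ring
    have hm0 : latEmb a0 ∈ latEmb '' (A : Set (Fin n → ℤ)) := ⟨a0, ha0, rfl⟩
    have hmi : ∀ i, latEmb (a i) ∈ latEmb '' (A : Set (Fin n → ℤ)) := fun i => ⟨a i, ha i, rfl⟩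
    refine hA.2 x Y hY0 (deep_mem _ a0 a hm0 hmi 0 ?_ _ ?_)
      (deep_mem _ a0 a hm0 hmi (fun i => k * t i) ?_ _ ?_)
    · intro i; simp
    · intro l; simp [latEmb, hxr]
    · intro i
      have := ht i
      push_cast at this
      rw [abs_mul, Nat.abs_cast]
      linarith
    · intro l
      simp only [latEmb, Pi.add_apply, Pi.smul_apply, smul_eq_mul]
      push_cast
      rw [hxr, hYl, Finset.mul_sum]
      congr 1
      refine Finset.sum_congr rfl fun i _ => ?_
      ring

theorem main_bound (n d : ℕ) : ∃ c : ℕ, ∀ k : ℕ, 1 ≤ k → ∀ A : Finset (Fin n → ℤ), GoodSet k A →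
    ∀ L : Submodule ℤ (Fin n → ℤ), Module.finrank ℤ L ≤ d + 1 →
      (∀ a ∈ A, ∀ b ∈ A, a - b ∈ L) → A.card ≤ c * k ^ d := by
  classical
  induction d with
  | zero =>
    exact ⟨2, fun k _ A hA L hL hAL => by simpa using base_case A hA L hL hAL⟩
  | succ d ih =>
    obtain ⟨c, hc⟩ := ih
    let e := d + 2
    let K := 2 * (e * (e + 1) ^ 2) + 1
    refine ⟨c * K * (e + 1) ^ n, fun k hk A hA L hL hAL => ?_⟩
    have hpow : k ^ d ≤ k ^ (d + 1) := Nat.pow_le_pow_right hk (Nat.le_succ d)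
    by_cases hlow : Module.finrank ℤ L ≤ d + 1
    · refine (hc k hk A hA L hlow hAL).trans ?_
      have h1 : c ≤ c * K * (e + 1) ^ n := by
        rw [mul_assoc]
        exact Nat.le_mul_of_pos_right _ (by positivity)
      exact Nat.mul_le_mul h1 hpow
    have hLe : Module.finrank ℤ L = e := by omega
    have hcls : A.card ≤ (c * K * k ^ (d + 1)) *
        (Finset.univ : Finset (Fin n → ZMod (e + 1))).card := by
      refine Finset.card_le_mul_card_image_of_maps_to
        (f := fun a : Fin n → ℤ => fun l => (a l : ZMod (e + 1))) (fun _ _ => Finset.mem_univ _) _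
        fun r _ => ?_
      set B := {a ∈ A | (fun l => (a l : ZMod (e + 1))) = r} with hB
      have hBA : B ⊆ A := Finset.filter_subset _ _
      have hBgood := hA.mono hBA
      have hBL : ∀ a ∈ B, ∀ b ∈ B, a - b ∈ L := fun a ha b hb => hAL a (hBA ha) b (hBA hb)
      have hmod : ∀ a ∈ B, ∀ b ∈ B, ∀ l, ((e + 1 : ℕ) : ℤ) ∣ a l - b l := by
        intro a ha b hb l
        rw [← ZMod.intCast_eq_intCast_iff_dvd_sub]
        have h1 := congrFun (Finset.mem_filter.1 ha).2 l
        have h2 := congrFun (Finset.mem_filter.1 hb).2 l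
        exact h2.trans h1.symm
      rcases B.eq_empty_or_nonempty with hemp | ⟨a0, ha0⟩
      · rw [hemp]; simp
      obtain ⟨g, hg, hgb⟩ := class_form hk (by omega) B hBgood L hLe hBL hmod a0 ha0
      let Q : ℕ := e * (k * (e + 1) ^ 2)
      let f : (Fin n → ℤ) → ℤ := fun a => if h : a - a0 ∈ L then g ⟨a - a0, h⟩ else 0
      have hslice : B.card ≤ (c * k ^ d) * (Finset.Icc (-(Q : ℤ)) Q).card := by
        refine Finset.card_le_mul_card_image_of_maps_to (f := f) ?_ _ fun s _ => ?_
        · intro a ha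
          have h1 := hgb a ha
          have h2 : f a = g ⟨a - a0, hBL a ha a0 ha0⟩ := dif_pos _
          rw [Finset.mem_Icc, ← abs_le, h2]
          refine h1.trans ?_
          simp only [Q]; push_cast; rfl
        · have hsub : {a ∈ B | f a = s} ⊆ B := Finset.filter_subset _ _
          refine hc k hk _ (hBgood.mono hsub) ((LinearMap.ker g).map L.subtype) ?_ ?_
          · have := finrank_ker_map_lt L g hg
            omega
          · intro a ha b hb
            have ha' := Finset.mem_filter.1 ha
            have hb' := Finset.mem_filter.1 hb
            have h1 : f a = g ⟨a - a0, hBL a ha'.1 a0 ha0⟩ := dif_pos _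
            have h2 : f b = g ⟨b - a0, hBL b hb'.1 a0 ha0⟩ := dif_pos _
            refine ⟨⟨a - b, hBL a ha'.1 b hb'.1⟩, ?_, rfl⟩
            have h3 : (⟨a - b, hBL a ha'.1 b hb'.1⟩ : L) =
                ⟨a - a0, hBL a ha'.1 a0 ha0⟩ - ⟨b - a0, hBL b hb'.1 a0 ha0⟩ := by
              ext1; simp
            rw [SetLike.mem_coe, LinearMap.mem_ker, h3, map_sub, ← h1, ← h2, ha'.2, hb'.2, sub_self]
      refine hslice.trans ?_
      have hIcc : (Finset.Icc (-(Q : ℤ)) Q).card = 2 * Q + 1 := by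
        rw [Int.card_Icc]; omega
      rw [hIcc]
      have hQ : 2 * Q + 1 ≤ K * k := by
        simp only [Q, K]; nlinarith
      calc c * k ^ d * (2 * Q + 1) ≤ c * k ^ d * (K * k) := Nat.mul_le_mul_left _ hQ
        _ = c * K * k ^ (d + 1) := by ring
    refine hcls.trans (le_of_eq ?_)
    simp [ZMod.card]
    ring

/-- For every `d ≥ 1` there is a constant `c(d) > 0` such that any convex
lattice polytope in `ℝ^d` containing no lattice segment of length `k` has at most
`c(d) · k^(d-1)` vertices. -/
theorem no_segment_polytope_vertex_bound (d : ℕ) (hd : 1 ≤ d) :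
    ∃ c : ℝ, 0 < c ∧ ∀ k : ℕ, 1 ≤ k → ∀ V : Finset (Fin d → ℝ),
      (V : Set (Fin d → ℝ)) ⊆ latticePoints d →
      ¬ContainsLatticeSegment d k (convexHull ℝ (V : Set (Fin d → ℝ))) →
      ((Set.extremePoints ℝ (convexHull ℝ (V : Set (Fin d → ℝ)))).ncard : ℝ) ≤
        c * (k : ℝ) ^ (d - 1) := by
  classical
  obtain ⟨c, hc⟩ := main_bound d (d - 1)
  refine ⟨c + 1, by positivity, fun k hk V hV hseg => ?_⟩
  set P := convexHull ℝ (V : Set (Fin d → ℝ)) with hP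
  have hext : P.extremePoints ℝ ⊆ V := extremePoints_convexHull_subset
  have hinj : Function.Injective (latEmb : (Fin d → ℤ) → Fin d → ℝ) := by
    intro x y h
    ext j
    have := congrFun h j
    simpa [latEmb] using this
  have hfin : (P.extremePoints ℝ).Finite := V.finite_toSet.subset hext
  have hpre : (latEmb ⁻¹' (P.extremePoints ℝ) : Set (Fin d → ℤ)).Finite :=
    hfin.preimage hinj.injOn
  let A : Finset (Fin d → ℤ) := hpre.toFinset
  have himg : latEmb '' (A : Set (Fin d → ℤ)) = P.extremePoints ℝ := by
    simp only [A, Set.Finite.coe_toFinset]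
    rw [Set.image_preimage_eq_iff]
    intro x hx
    choose m hm using hV (hext hx)
    exact ⟨m, funext fun j => (hm j).symm⟩
  have hhull : convexHull ℝ (latEmb '' (A : Set (Fin d → ℤ))) ⊆ P := by
    rw [himg]
    exact convexHull_min extremePoints_subset (convex_convexHull ℝ _)
  have hgood : GoodSet k A := by
    refine ⟨fun a ha h => ?_, fun x y hy hx hxy => hseg ⟨x, y, hy, fun i hi => ?_⟩⟩
    · have hci := convexIndependent_set_iff_notMem_convexHull_sdiff.1
        (convex_convexHull ℝ (V : Set (Fin d → ℝ))).convexIndependent_extremePoints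
      refine hci (latEmb a) (by rw [← hP, ← himg]; exact ⟨a, ha, rfl⟩) ?_
      rw [Set.image_sdiff hinj, himg, Set.image_singleton] at h
      exact h
    · have hk' : (0 : ℝ) < k := by exact_mod_cast hk
      have hi' : (i : ℝ) ≤ k := by exact_mod_cast hi
      have key := (convex_convexHull ℝ (V : Set (Fin d → ℝ))) (hhull hx) (hhull hxy)
        (a := 1 - (i : ℝ) / k) (b := (i : ℝ) / k)
        (by rw [sub_nonneg, div_le_one hk']; exact hi') (by positivity) (by ring)
      convert key using 1
      ext j
      simp only [latEmb, Pi.add_apply, Pi.smul_apply, smul_eq_mul]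
      push_cast
      field_simp
      ring
  have hcard : (P.extremePoints ℝ).ncard = A.card := by
    rw [← himg, Set.ncard_image_of_injective _ hinj, Set.ncard_coe_finset]
  have hb := hc k hk A hgood ⊤ (by simp; omega) (fun _ _ _ _ => Submodule.mem_top)
  rw [hcard]
  have hb' : (A.card : ℝ) ≤ c * (k : ℝ) ^ (d - 1) := by exact_mod_cast hb
  refine hb'.trans ?_
  gcongr
  linarith
end
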